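/- arXiv:2505.05140 — 3 statements merged into one kernel-verified Lean document; each statement's English description precedes it below -/
import Mathlib

section
/- Let T > 0 and let w₁, w₂ : {(x,s) : 0 ≤ x ≤ s ≤ T} → ℂ be continuous. Define bounded operators A, B on L²([0,T]; ℂ) by (A f)(x) := f(T−x) + ∫_x^T w₁(x,s) f(T−s) ds and (B f)(x) := i f(T−x) + ∫_x^T w₂(x,s) f(T−s) ds. Then the set U := { (A f, B f) : f ∈ L²([0,T]; ℂ) } is a closed subspace of L²([0,T]; ℂ²) whose orthogonal complement is nonzero; in particular, U is not dense in L²([0,T]; ℂ²). -/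
/-!
Write `A f = g + V g` with `g x = f (T - x)` and `V g x = ∫_x^T w₁(x,s) g(s) ds`.

The reflection `f ↦ g` is an isometry of `L²`. In the weighted norm
`‖g‖_l = ‖e^{l x} g‖_{L²}`, Cauchy-Schwarz makes the norm of the Volterra operator `V` at most
`M √(T / (2 l))`, where `M` bounds `|w₁|`, so for `l = 2 M² T` it is at most `1/2`. Since the
weighted norm is equivalent to the usual one, `A` is bounded below (`exists_norm_le_mul`).

Hence `f ↦ (A f, B f)` is bounded below as well, and its range is closed. The range is a proper
subspace: as `A` is injective, it contains no `(0, b)` with `b ≠ 0`. A closed proper subspace is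
not dense and has a nonzero orthogonal complement.
-/

open MeasureTheory Set

noncomputable section

/-- The measure `Lebesgue on [0,T]`. -/
def muT (T : ℝ) : Measure ℝ := volume.restrict (Icc (0 : ℝ) T)

/-- The reachable set `U = {(A f, B f) : f ∈ L²}`, as a submodule of
`L²([0,T];ℂ) ⊕₂ L²([0,T];ℂ)` (the latter identified with `L²([0,T];ℂ²)`). -/
def reachSet (T : ℝ)
    (A B : Lp ℂ 2 (muT T) →L[ℂ] Lp ℂ 2 (muT T)) :
    Submodule ℂ (WithLp 2 (Lp ℂ 2 (muT T) × Lp ℂ 2 (muT T))) :=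
  LinearMap.range
    (((WithLp.linearEquiv 2 ℂ (Lp ℂ 2 (muT T) × Lp ℂ 2 (muT T))).symm.toLinearMap).comp
      ((A : Lp ℂ 2 (muT T) →ₗ[ℂ] Lp ℂ 2 (muT T)).prod
        (B : Lp ℂ 2 (muT T) →ₗ[ℂ] Lp ℂ 2 (muT T))))

open scoped ENNReal NNReal

instance muT_isFiniteMeasure (T : ℝ) : IsFiniteMeasure (muT T) := by
  unfold muT; infer_instance

lemma measurePreserving_reflect (T : ℝ) :
    MeasurePreserving (fun x : ℝ => T - x) (muT T) (muT T) := by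
  have h := (Measure.measurePreserving_sub_left (volume : Measure ℝ) T).restrict_preimage
    (measurableSet_Icc (a := (0 : ℝ)) (b := T))
  have e : (fun x : ℝ => T - x) ⁻¹' Icc 0 T = Icc 0 T := by
    ext x; simp only [mem_preimage, mem_Icc]; constructor <;> intro h <;> constructor <;> linarith [h.1, h.2]
  rw [e] at h
  exact h

/-- Pointwise Cauchy-Schwarz estimate for the Volterra operator, against the weight `e^{l x}`. -/
lemma volterra_pointwise (T M l : ℝ) (hM : 0 < M) (hl : 0 < l) (w : ℝ → ℝ → ℂ)
    (hw : ∀ x s, 0 ≤ x → x ≤ s → s ≤ T → ‖w x s‖ ≤ M) (g : ℝ → ℂ)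
    (hg : AEStronglyMeasurable g (muT T)) (x : ℝ) (hx : x ∈ Icc 0 T) :
    ‖(Real.exp (l * x) : ℂ) * ∫ s in x..T, w x s * g s‖ₑ ≤
      ENNReal.ofReal (M / √(2 * l)) *
        eLpNorm (fun s => (Real.exp (l * s) : ℂ) * g s) 2 (muT T) := by
  have hsub : Ioc x T ⊆ Icc 0 T := fun s hs => ⟨hx.1.trans hs.1.le, hs.2⟩
  have hle : volume.restrict (Ioc x T) ≤ muT T := Measure.restrict_mono hsub le_rfl
  rw [intervalIntegral.integral_of_le hx.2, ← integral_const_mul]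
  refine (enorm_integral_le_lintegral_enorm _).trans ?_
  have h1 : ∫⁻ s in Ioc x T, ‖(Real.exp (l * x) : ℂ) * (w x s * g s)‖ₑ ≤
      ∫⁻ s in Ioc x T, ENNReal.ofReal (M * Real.exp (l * (x - s))) *
        ‖(Real.exp (l * s) : ℂ) * g s‖ₑ := by
    refine setLIntegral_mono' measurableSet_Ioc fun s hs => ?_
    rw [← ofReal_norm, ← ofReal_norm, ← ENNReal.ofReal_mul (by positivity)]
    refine ENNReal.ofReal_le_ofReal ?_
    rw [norm_mul, norm_mul, norm_mul, Complex.norm_real, Complex.norm_real, Real.norm_eq_abs,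
      Real.norm_eq_abs, abs_of_pos (Real.exp_pos _), abs_of_pos (Real.exp_pos _)]
    have e : Real.exp (l * x) = Real.exp (l * (x - s)) * Real.exp (l * s) := by
      rw [← Real.exp_add]; congr 1; ring
    rw [e]
    calc _ = Real.exp (l * (x - s)) * Real.exp (l * s) * ‖g s‖ * ‖w x s‖ := by ring
      _ ≤ Real.exp (l * (x - s)) * Real.exp (l * s) * ‖g s‖ * M := by
        gcongr
        exact hw x s hx.1 hs.1.le hs.2
      _ = _ := by ring
  refine h1.trans ?_
  have hgm : AEStronglyMeasurable (fun s => (Real.exp (l * s) : ℂ) * g s) (muT T) :=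
    (Continuous.aestronglyMeasurable (by fun_prop)).mul hg
  refine (ENNReal.lintegral_mul_le_Lp_mul_Lq _ Real.HolderConjugate.two_two
    (f := fun s => ENNReal.ofReal (M * Real.exp (l * (x - s))))
    (g := fun s => ‖(Real.exp (l * s) : ℂ) * g s‖ₑ)
    (by fun_prop) (hgm.mono_measure hle).enorm).trans ?_
  gcongr
  · have hexp : ∫⁻ s in Ioc x T, ENNReal.ofReal (M * Real.exp (l * (x - s))) ^ (2 : ℝ) ≤
        ENNReal.ofReal ((M / √(2 * l)) ^ 2) := by
      have hneg : -(2 * l) < 0 := by linarith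
      have hint := (integrableOn_exp_mul_Ioi hneg x).const_mul (M ^ 2 * Real.exp (2 * l * x))
      calc _ ≤ ∫⁻ s in Ioi x, ENNReal.ofReal (M * Real.exp (l * (x - s))) ^ (2 : ℝ) :=
            lintegral_mono_set Ioc_subset_Ioi_self
        _ = ∫⁻ s in Ioi x, ENNReal.ofReal
              (M ^ 2 * Real.exp (2 * l * x) * Real.exp (-(2 * l) * s)) := by
            congr 1; ext s
            rw [ENNReal.ofReal_rpow_of_nonneg (by positivity) (by norm_num)]
            congr 1
            rw [Real.rpow_two, mul_pow, ← Real.exp_nat_mul, mul_assoc, ← Real.exp_add]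
            congr 2; push_cast; ring
        _ = ENNReal.ofReal (∫ s in Ioi x,
              M ^ 2 * Real.exp (2 * l * x) * Real.exp (-(2 * l) * s)) :=
            (ofReal_integral_eq_lintegral_ofReal hint
              (Filter.Eventually.of_forall fun s => by positivity)).symm
        _ = ENNReal.ofReal ((M / √(2 * l)) ^ 2) := by
            rw [integral_const_mul, integral_exp_mul_Ioi hneg, div_pow,
              Real.sq_sqrt (by positivity), neg_div_neg_eq, mul_assoc, ← mul_div_assoc,
              ← Real.exp_add]
            congr 1
            have : 2 * l * x + -(2 * l) * x = 0 := by ring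
            rw [this, Real.exp_zero]; ring
    calc _ ≤ (ENNReal.ofReal ((M / √(2 * l)) ^ 2)) ^ (1 / 2 : ℝ) := by gcongr
      _ = _ := by
        rw [ENNReal.ofReal_rpow_of_nonneg (by positivity) (by norm_num), ← Real.sqrt_eq_rpow,
          Real.sqrt_sq (by positivity)]
  · rw [eLpNorm_eq_lintegral_rpow_enorm_toReal (by norm_num) (by norm_num)]
    simp only [ENNReal.toReal_ofNat]
    gcongr

/-- An operator of the form reflection plus Volterra is bounded below on `L²`. -/
lemma exists_norm_le_mul (T : ℝ) (hT : 0 < T) (w : ℝ → ℝ → ℂ)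
    (hw : ContinuousOn (fun z : ℝ × ℝ => w z.1 z.2)
      {z : ℝ × ℝ | 0 ≤ z.1 ∧ z.1 ≤ z.2 ∧ z.2 ≤ T})
    (A : Lp ℂ 2 (muT T) →L[ℂ] Lp ℂ 2 (muT T))
    (hA : ∀ f : Lp ℂ 2 (muT T),
      (A f : ℝ → ℂ) =ᵐ[muT T] fun x => f (T - x) + ∫ s in x..T, w x s * f (T - s)) :
    ∃ C : ℝ≥0, ∀ f : Lp ℂ 2 (muT T), ‖f‖ ≤ C * ‖A f‖ := by
  obtain ⟨M, hM, hwM⟩ : ∃ M : ℝ, 0 < M ∧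
      ∀ x s, 0 ≤ x → x ≤ s → s ≤ T → ‖w x s‖ ≤ M := by
    have hK : IsCompact {z : ℝ × ℝ | 0 ≤ z.1 ∧ z.1 ≤ z.2 ∧ z.2 ≤ T} := by
      refine (isCompact_Icc.prod isCompact_Icc : IsCompact (Icc 0 T ×ˢ Icc 0 T)).of_isClosed_subset
        ?_ ?_
      · exact (isClosed_le continuous_const continuous_fst).inter
          ((isClosed_le continuous_fst continuous_snd).inter
            (isClosed_le continuous_snd continuous_const))
      · rintro ⟨x, s⟩ ⟨h1, h2, h3⟩
        exact ⟨⟨h1, h2.trans h3⟩, ⟨h1.trans h2, h3⟩⟩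
    obtain ⟨M, hM⟩ := hK.exists_bound_of_continuousOn hw
    exact ⟨max M 1, by positivity, fun x s h1 h2 h3 =>
      (hM (x, s) ⟨h1, h2, h3⟩).trans (le_max_left _ _)⟩
  set l : ℝ := 2 * M ^ 2 * T with hl_def
  have hl : 0 < l := by positivity
  have hae : ∀ᵐ x ∂(muT T), x ∈ Icc 0 T := ae_restrict_mem measurableSet_Icc
  have hec : Continuous fun x : ℝ => (Real.exp (l * x) : ℂ) := by fun_prop
  refine ⟨2 * (Real.exp (l * T)).toNNReal, fun f => ?_⟩
  set g : ℝ → ℂ := fun x => f (T - x) with hg_def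
  have hfm := Lp.memLp f
  have hg : MemLp g 2 (muT T) := hfm.comp_measurePreserving (measurePreserving_reflect T)
  have hgn : eLpNorm g 2 (muT T) = eLpNorm f 2 (muT T) :=
    eLpNorm_comp_measurePreserving hfm.1 (measurePreserving_reflect T)
  have hweight : ∀ x ∈ Icc 0 T, 1 ≤ ‖(Real.exp (l * x) : ℂ)‖ ∧
      ‖(Real.exp (l * x) : ℂ)‖ ≤ Real.exp (l * T) := by
    intro x hx
    rw [Complex.norm_real, Real.norm_eq_abs, abs_of_pos (Real.exp_pos _)]
    exact ⟨Real.one_le_exp (mul_nonneg hl.le hx.1),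
      Real.exp_le_exp.2 (mul_le_mul_of_nonneg_left hx.2 hl.le)⟩
  have hupper : ∀ h : ℝ → ℂ, eLpNorm (fun x => (Real.exp (l * x) : ℂ) * h x) 2 (muT T) ≤
      ENNReal.ofReal (Real.exp (l * T)) * eLpNorm h 2 (muT T) := fun h =>
    eLpNorm_le_mul_eLpNorm_of_ae_le_mul (by
      filter_upwards [hae] with x hx
      rw [norm_mul]
      gcongr
      exact (hweight x hx).2) 2
  have hlower : eLpNorm g 2 (muT T) ≤
      eLpNorm (fun x => (Real.exp (l * x) : ℂ) * g x) 2 (muT T) :=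
    eLpNorm_mono_ae (by
      filter_upwards [hae] with x hx
      rw [norm_mul]
      exact le_mul_of_one_le_left (norm_nonneg _) (hweight x hx).1)
  set N := eLpNorm (fun x => (Real.exp (l * x) : ℂ) * g x) 2 (muT T) with hN
  have hNfin : N ≠ ∞ :=
    ((hupper g).trans_lt (ENNReal.mul_lt_top ENNReal.ofReal_lt_top hg.2)).ne
  set k : ℝ → ℂ := fun x => ∫ s in x..T, w x s * g s with hk
  have hAf : (A f : ℝ → ℂ) =ᵐ[muT T] fun x => g x + k x := hA f
  have hkV : eLpNorm (fun x => (Real.exp (l * x) : ℂ) * k x) 2 (muT T) ≤ N / 2 := by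
    have hb : ∀ᵐ x ∂(muT T), ‖(Real.exp (l * x) : ℂ) * k x‖ₑ ≤
        ENNReal.ofReal (M / √(2 * l)) * N := by
      filter_upwards [hae] with x hx
      exact volterra_pointwise T M l hM hl w hwM g hg.1 x hx
    refine (eLpNorm_mono_enorm_ae (g := fun _ => ENNReal.ofReal (M / √(2 * l)) * N)
      (by simpa using hb)).trans ?_
    rw [eLpNorm_const' _ (by norm_num) (by norm_num)]
    have hvol : muT T univ = ENNReal.ofReal T := by simp [muT]
    rw [hvol, ENNReal.ofReal_rpow_of_pos hT, enorm_eq_self, mul_right_comm,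
      ← ENNReal.ofReal_mul (by positivity), ENNReal.div_eq_inv_mul]
    gcongr
    rw [ENNReal.toReal_ofNat, ← Real.sqrt_eq_rpow]
    -- the choice of `l` makes the contraction constant exactly `1/2`
    have e : √(2 * l) = 2 * M * √T := by
      rw [hl_def, show 2 * (2 * M ^ 2 * T) = (2 * M) ^ 2 * T by ring,
        Real.sqrt_mul (by positivity), Real.sqrt_sq (by positivity)]
    have hsT : 0 < √T := Real.sqrt_pos.2 hT
    rw [e, show M / (2 * M * √T) * √T = 2⁻¹ by field_simp,
      ENNReal.ofReal_inv_of_pos (by norm_num), ENNReal.ofReal_ofNat]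
  have htri : N ≤ eLpNorm (fun x => (Real.exp (l * x) : ℂ) * A f x) 2 (muT T) + N / 2 := by
    have hkm : AEStronglyMeasurable k (muT T) := by
      refine ((Lp.memLp (A f)).1.sub hg.1).congr ?_
      filter_upwards [hAf] with x hx
      simp [hx]
    have e : (fun x => (Real.exp (l * x) : ℂ) * g x) =ᵐ[muT T]
        (fun x => (Real.exp (l * x) : ℂ) * A f x) - fun x => (Real.exp (l * x) : ℂ) * k x := by
      filter_upwards [hAf] with x hx
      simp only [Pi.sub_apply, hx]; ring
    calc N = _ := eLpNorm_congr_ae e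
      _ ≤ _ := eLpNorm_sub_le (hec.aestronglyMeasurable.mul (Lp.memLp (A f)).1)
        (hec.aestronglyMeasurable.mul hkm) (by norm_num)
      _ ≤ _ := by gcongr
  have hhalf : N / 2 ≤ eLpNorm (fun x => (Real.exp (l * x) : ℂ) * A f x) 2 (muT T) := by
    have h2 : N / 2 ≠ ∞ := ENNReal.div_ne_top hNfin (by norm_num)
    nth_rewrite 1 [← ENNReal.add_halves N] at htri
    exact (ENNReal.add_le_add_iff_right h2).1 htri
  have hfin : eLpNorm f 2 (muT T) ≤
      2 * ENNReal.ofReal (Real.exp (l * T)) * eLpNorm (A f) 2 (muT T) := by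
    rw [← hgn]
    calc _ ≤ N := hlower
      _ = 2 * (N / 2) := (ENNReal.mul_div_cancel (by norm_num) (by norm_num)).symm
      _ ≤ 2 * (ENNReal.ofReal (Real.exp (l * T)) * eLpNorm (A f) 2 (muT T)) := by
        gcongr; exact hhalf.trans (hupper _)
      _ = _ := (mul_assoc _ _ _).symm
  have := ENNReal.toReal_mono (ENNReal.mul_ne_top (by finiteness) (Lp.memLp (A f)).2.ne) hfin
  rw [Lp.norm_def, Lp.norm_def]
  simpa [ENNReal.toReal_mul, Real.exp_nonneg] using this

/-- Lack of local boundary controllability: the reachable set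
`U = {(A f, B f)}` is a closed subspace of `L²([0,T];ℂ²)` with nonzero orthogonal
complement; in particular it is not dense. -/
theorem stmt9 (T : ℝ) (hT : 0 < T) (w₁ w₂ : ℝ → ℝ → ℂ)
    (hw₁ : ContinuousOn (fun z : ℝ × ℝ => w₁ z.1 z.2)
      {z : ℝ × ℝ | 0 ≤ z.1 ∧ z.1 ≤ z.2 ∧ z.2 ≤ T})
    (hw₂ : ContinuousOn (fun z : ℝ × ℝ => w₂ z.1 z.2)
      {z : ℝ × ℝ | 0 ≤ z.1 ∧ z.1 ≤ z.2 ∧ z.2 ≤ T})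
    (A B : Lp ℂ 2 (muT T) →L[ℂ] Lp ℂ 2 (muT T))
    (hA : ∀ f : Lp ℂ 2 (muT T),
      (A f : ℝ → ℂ) =ᵐ[muT T] fun x => f (T - x) + ∫ s in x..T, w₁ x s * f (T - s))
    (hB : ∀ f : Lp ℂ 2 (muT T),
      (B f : ℝ → ℂ) =ᵐ[muT T]
        fun x => Complex.I * f (T - x) + ∫ s in x..T, w₂ x s * f (T - s)) :
    IsClosed ((reachSet T A B : Set (WithLp 2 (Lp ℂ 2 (muT T) × Lp ℂ 2 (muT T))))) ∧
      (reachSet T A B)ᗮ ≠ ⊥ ∧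
      ¬ Dense ((reachSet T A B : Set (WithLp 2 (Lp ℂ 2 (muT T) × Lp ℂ 2 (muT T))))) := by
  obtain ⟨C, hC⟩ := exists_norm_le_mul T hT w₁ hw₁ A hA
  let L : Lp ℂ 2 (muT T) →L[ℂ] WithLp 2 (Lp ℂ 2 (muT T) × Lp ℂ 2 (muT T)) :=
    (WithLp.prodContinuousLinearEquiv 2 ℂ (Lp ℂ 2 (muT T)) (Lp ℂ 2 (muT T))).symm.toContinuousLinearMap.comp
      (A.prod B)
  have hLfst : ∀ f, (L f).fst = A f := fun _ => rfl
  have hLsnd : ∀ f, (L f).snd = B f := fun _ => rfl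
  have hU : (reachSet T A B : Set (WithLp 2 (Lp ℂ 2 (muT T) × Lp ℂ 2 (muT T)))) = range L := rfl
  have hanti : AntilipschitzWith C L := L.antilipschitz_of_bound fun f => by
    refine (hC f).trans ?_
    gcongr
    rw [← hLfst]
    exact WithLp.norm_fst_le _ _
  have hclosed : IsClosed
      (reachSet T A B : Set (WithLp 2 (Lp ℂ 2 (muT T) × Lp ℂ 2 (muT T)))) := by
    rw [hU]
    exact hanti.isClosed_range L.uniformContinuous
  have hne : reachSet T A B ≠ ⊤ := by
    intro htop
    have hmeas : muT T ≠ 0 := by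
      intro h
      have h0 : muT T univ = ENNReal.ofReal T := by simp [muT]
      rw [h] at h0
      simp [hT.not_ge] at h0
    let b : Lp ℂ 2 (muT T) := (memLp_const (1 : ℂ)).toLp
    have hb : b ≠ 0 := by
      intro h
      have h1 : (fun _ : ℝ => (1 : ℂ)) =ᵐ[muT T] fun _ => 0 :=
        ((memLp_const (1 : ℂ)).coeFn_toLp.symm.trans (by rw [show MemLp.toLp _ _ = b from rfl, h])).trans
          (Lp.coeFn_zero ℂ 2 (muT T))
      have : NeZero (muT T) := ⟨hmeas⟩
      obtain ⟨x, hx⟩ := h1.exists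
      exact one_ne_zero hx
    have hmem : WithLp.toLp 2 ((0 : Lp ℂ 2 (muT T)), b) ∈ range L := by
      rw [← hU, htop]; trivial
    obtain ⟨f, hf⟩ := hmem
    have hf1 : A f = 0 := by rw [← hLfst, hf, WithLp.toLp_fst]
    have hf0 : f = 0 := by
      have := hC f
      rw [hf1, norm_zero, mul_zero] at this
      exact norm_le_zero_iff.1 this
    apply hb
    have : B f = b := by rw [← hLsnd, hf, WithLp.toLp_snd]
    rw [← this, hf0, map_zero]
  refine ⟨hclosed, ?_, ?_⟩
  · have : CompleteSpace (reachSet T A B) := hclosed.completeSpace_coe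
    rwa [Ne, Submodule.orthogonal_eq_bot_iff]
  · intro hd
    apply hne
    rw [← SetLike.coe_set_eq, Submodule.top_coe, ← hclosed.closure_eq, hd.closure_eq]
end
end

section
/- Let T > 0 and r ∈ C¹([0,2T]; ℂ), extended by zero to negative arguments. Define the matrix kernel c on [0,T]² by c₁₁(t,s) = −i[r(t−s) − conj(r(s−t))], c₁₂(t,s) = −i conj(r(2T−t−s)), c₂₁(t,s) = i r(2T−t−s), c₂₂(t,s) = i[conj(r(t−s)) − r(s−t)], and for a : [0,T] → ℂ² set (C a)(t) := 2 a(t) + ∫₀^T c(t,s) a(s) ds. Let Q := diag(1,−1). Then for all a, b ∈ C¹([0,T]; ℂ²) with a(0) = a′(0) = 0, b(0) = b′(0) = 0, a₁(T) + a₂(T) = 0, and b₁(T) + b₂(T) = 0, one has ∫₀^T (C(−i Q a′))(t) · conj(b(t)) dt = ∫₀^T (C a)(t) · conj(−i Q b′(t)) dt. -/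
/-!
Formally, the symmetry says that the kernel satisfies `∂ₛ c Q + Q ∂ₜ c = 0` together with the
boundary conditions. The diagonal entries of `c` are functions of `t - s` and the off-diagonal
ones are functions of `t + s`, while `Q` has opposite signs on the two coordinates, so the equation
holds entrywise. What remains are boundary terms. Those at `0` vanish because `a 0 = b 0 = 0`.
At `T`, the entries of `c` satisfy, for `t, s < T`,
`c₁₁(t,T) = -c₁₂(t,T)`, `c₂₁(t,T) = -c₂₂(t,T)`, `c₁₁(T,s) = -c₂₁(T,s)`, `c₁₂(T,s) = -c₂₂(T,s)`,
so that `a₁(T) + a₂(T) = 0` and `b₁(T) + b₂(T) = 0` make the contributions cancel in pairs.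

Since `r` jumps at `0`, the integrations by parts are carried out separately for the truncated
kernels `f(t-s)` on `s ≤ t`, `f(s-t)` on `t ≤ s`, and `f(2T-t-s)`, with `f = r` or its conjugate:
`pairing_lower`, `pairing_upper` and `pairing_reflected` compute the boundary terms, and
`form_expand` reduces the vector-valued identity to these scalar ones. All functions are first
replaced by continuously differentiable extensions to the line (`exists_extension`), which agree
with them on the intervals that enter the integrals.
-/


open MeasureTheory Set

noncomputable section

/-- The matrix `Q = diag(1,-1)`. -/
def Qmat : Matrix (Fin 2) (Fin 2) ℂ := !![1, 0; 0, -1]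

/-- The matrix kernel `c(t,s)` built from the response function `r`. -/
def cker (T : ℝ) (r : ℝ → ℂ) (t s : ℝ) : Matrix (Fin 2) (Fin 2) ℂ :=
  !![-Complex.I * (r (t - s) - (starRingEnd ℂ) (r (s - t))),
      -Complex.I * (starRingEnd ℂ) (r (2 * T - t - s));
     Complex.I * r (2 * T - t - s),
      Complex.I * ((starRingEnd ℂ) (r (t - s)) - r (s - t))]

/-- The connecting operator `(C a)(t) = 2 a(t) + ∫₀^T c(t,s) a(s) ds`. -/
def Cop (T : ℝ) (r : ℝ → ℂ) (a : ℝ → Fin 2 → ℂ) (t : ℝ) : Fin 2 → ℂ :=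
  (2 : ℂ) • a t + ∫ s in (0 : ℝ)..T, (cker T r t s).mulVec (a s)

/-- The operation `a ↦ -i Q a'` (with the derivative within `[0,T]`). -/
def DQ (T : ℝ) (a : ℝ → Fin 2 → ℂ) (t : ℝ) : Fin 2 → ℂ :=
  (-Complex.I) • Qmat.mulVec (derivWithin a (Icc (0 : ℝ) T) t)

/-! ### Extension of functions to the line -/

/-- A continuously differentiable function on `[0,L]` is the restriction of a function that is
continuously differentiable on the whole line. -/
lemma exists_extension {E : Type*} [NormedAddCommGroup E] [NormedSpace ℝ E] [CompleteSpace E]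
    {L : ℝ} (hL : 0 < L) {f : ℝ → E} (hf : ContDiffOn ℝ 1 f (Icc 0 L)) :
    ∃ g g' : ℝ → E, Continuous g' ∧ (∀ x, HasDerivAt g (g' x) x) ∧
      (∀ x ∈ Icc 0 L, f x = g x) ∧ ∀ x ∈ Icc 0 L, derivWithin f (Icc 0 L) x = g' x := by
  have hU : UniqueDiffOn ℝ (Icc 0 L) := uniqueDiffOn_Icc hL
  have hc : ContinuousOn (derivWithin f (Icc 0 L)) (Icc 0 L) :=
    hf.continuousOn_derivWithin hU le_rfl
  set d : ℝ → E := IccExtend hL.le ((Icc 0 L).domRestrict (derivWithin f (Icc 0 L))) with hd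
  have hdc : Continuous d := (continuousOn_iff_continuous_domRestrict.mp hc).Icc_extend'
  have hdeq : ∀ x ∈ Icc 0 L, derivWithin f (Icc 0 L) x = d x := fun x hx => by
    rw [hd, IccExtend_of_mem hL.le _ hx]; rfl
  have hg : ∀ x, HasDerivAt (fun x => f 0 + ∫ y in (0:ℝ)..x, d y) (d x) x := fun x =>
    (hdc.integral_hasStrictDerivAt 0 x).hasDerivAt.const_add _
  refine ⟨fun x => f 0 + ∫ y in (0:ℝ)..x, d y, d, hdc, hg, ?_, hdeq⟩
  refine eq_of_derivWithin_eq (hf.differentiableOn one_ne_zero)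
    (fun x _ => (hg x).differentiableAt.differentiableWithinAt) ?_ (by simp)
  intro x hx
  rw [hdeq x (Ico_subset_Icc_self hx),
    (hg x).hasDerivWithinAt.derivWithin (hU x (Ico_subset_Icc_self hx))]

/-! ### Bounded kernels and their pairings -/

/-- A bounded measurable scalar kernel. -/
structure BddKernel (K : ℝ → ℝ → ℂ) : Prop where
  meas : Measurable (Function.uncurry K)
  bdd : ∃ M, ∀ t s, ‖K t s‖ ≤ M

/-- The bilinear pairing `∫₀ᵀ (∫₀ᵀ K(t,s) x(s) ds) y(t) dt` of two scalar functions. -/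
def pairing (T : ℝ) (K : ℝ → ℝ → ℂ) (x y : ℝ → ℂ) : ℂ :=
  ∫ t in (0 : ℝ)..T, (∫ s in (0 : ℝ)..T, K t s * x s) * y t

/-- The restriction of `f` to `[0,L]`, extended by zero. -/
def trunc (L : ℝ) (f : ℝ → ℂ) : ℝ → ℂ := (Icc 0 L).indicator f

namespace BddKernel

variable {K K₁ K₂ : ℝ → ℝ → ℂ}

lemma const_mul (c : ℂ) (h : BddKernel K) : BddKernel (fun t s => c * K t s) := by
  obtain ⟨M, hM⟩ := h.bdd
  refine ⟨h.meas.const_mul c, ‖c‖ * M, fun t s => ?_⟩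
  rw [norm_mul]
  gcongr
  exact hM t s

lemma add (h₁ : BddKernel K₁) (h₂ : BddKernel K₂) :
    BddKernel (fun t s => K₁ t s + K₂ t s) := by
  obtain ⟨M₁, hM₁⟩ := h₁.bdd
  obtain ⟨M₂, hM₂⟩ := h₂.bdd
  exact ⟨h₁.meas.add h₂.meas, M₁ + M₂, fun t s =>
    (norm_add_le _ _).trans (add_le_add (hM₁ t s) (hM₂ t s))⟩

lemma flip (h : BddKernel K) : BddKernel (fun t s => K s t) := by
  obtain ⟨M, hM⟩ := h.bdd
  exact ⟨h.meas.comp measurable_swap, M, fun t s => hM s t⟩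

lemma of_trunc {L : ℝ} {f : ℝ → ℂ} (hf : Continuous f) {φ : ℝ → ℝ → ℝ}
    (hφ : Measurable (Function.uncurry φ)) : BddKernel (fun t s => trunc L f (φ t s)) := by
  obtain ⟨M, hM⟩ := (isCompact_Icc (a := (0 : ℝ)) (b := L)).exists_bound_of_continuousOn
    hf.continuousOn
  refine ⟨(hf.measurable.indicator measurableSet_Icc).comp hφ, max M 0, fun t s => ?_⟩
  simp only [trunc, indicator]
  split_ifs with h
  · exact (hM _ h).trans (le_max_left _ _)
  · simp

lemma intervalIntegrable {T : ℝ} (h : BddKernel K) {x : ℝ → ℂ} (hx : Continuous x) (t : ℝ) :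
    IntervalIntegrable (fun s => K t s * x s) volume 0 T := by
  obtain ⟨M, hM⟩ := h.bdd
  have hm : Measurable (K t) := h.meas.comp measurable_prodMk_left
  have hi := hx.intervalIntegrable (μ := volume) 0 T
  exact ⟨hi.1.bdd_mul hm.aestronglyMeasurable (.of_forall (hM t)),
    hi.2.bdd_mul hm.aestronglyMeasurable (.of_forall (hM t))⟩

lemma integrable_prod {T : ℝ} (hT : 0 ≤ T) (h : BddKernel K) {x y : ℝ → ℂ} (hx : Continuous x)
    (hy : Continuous y) :
    Integrable (Function.uncurry fun t s => K t s * x s * y t)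
      ((volume.restrict (Ioc 0 T)).prod (volume.restrict (Ioc 0 T))) := by
  obtain ⟨M, hM⟩ := h.bdd
  have hx' : Integrable x (volume.restrict (Ioc 0 T)) :=
    (intervalIntegrable_iff_integrableOn_Ioc_of_le hT).1 (hx.intervalIntegrable 0 T)
  have hy' : Integrable y (volume.restrict (Ioc 0 T)) :=
    (intervalIntegrable_iff_integrableOn_Ioc_of_le hT).1 (hy.intervalIntegrable 0 T)
  refine ((hy'.mul_prod hx').bdd_mul h.meas.aestronglyMeasurable
    (.of_forall fun z => hM z.1 z.2)).congr (.of_forall fun z => ?_)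
  simp only [Function.uncurry]
  ring

lemma intervalIntegrable_outer {T : ℝ} (hT : 0 ≤ T) (h : BddKernel K) {x y : ℝ → ℂ}
    (hx : Continuous x) (hy : Continuous y) :
    IntervalIntegrable (fun t => (∫ s in (0 : ℝ)..T, K t s * x s) * y t) volume 0 T := by
  rw [intervalIntegrable_iff_integrableOn_Ioc_of_le hT]
  refine (h.integrable_prod hT hx hy).integral_prod_left.congr (.of_forall fun t => ?_)
  simp only [Function.uncurry, intervalIntegral.integral_of_le hT]
  rw [integral_mul_const]

lemma pairing_flip {T : ℝ} (hT : 0 ≤ T) (h : BddKernel K) {x y : ℝ → ℂ}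
    (hx : Continuous x) (hy : Continuous y) :
    pairing T K x y = pairing T (fun t s => K s t) y x := by
  have := integral_integral_swap (h.integrable_prod hT hx hy)
  simp only [pairing, intervalIntegral.integral_of_le hT, ← integral_mul_const]
  rw [this]
  congr! 4
  ring

lemma pairing_const_mul {T : ℝ} (c : ℂ) (x y : ℝ → ℂ) :
    pairing T (fun t s => c * K t s) x y = c * pairing T K x y := by
  simp only [pairing, mul_assoc, intervalIntegral.integral_const_mul]

lemma pairing_add {T : ℝ} (hT : 0 ≤ T) (h₁ : BddKernel K₁) (h₂ : BddKernel K₂) {x y : ℝ → ℂ}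
    (hx : Continuous x) (hy : Continuous y) :
    pairing T (fun t s => K₁ t s + K₂ t s) x y = pairing T K₁ x y + pairing T K₂ x y := by
  simp only [pairing]
  rw [← intervalIntegral.integral_add (h₁.intervalIntegrable_outer hT hx hy)
    (h₂.intervalIntegrable_outer hT hx hy)]
  congr with t
  rw [← add_mul, ← intervalIntegral.integral_add (h₁.intervalIntegrable hx t)
    (h₂.intervalIntegrable hx t)]
  simp only [add_mul]

end BddKernel

/-! ### Integration by parts for difference and reflected kernels -/

lemma integral_trunc_right {T : ℝ} (f x : ℝ → ℂ) (hf : Continuous f) (hx : Continuous x) {t : ℝ}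
    (ht : t ∈ Icc 0 T) :
    ∫ s in (0 : ℝ)..T, trunc (2 * T) f (t - s) * x s = ∫ s in (0 : ℝ)..t, f (t - s) * x s := by
  have hI := (BddKernel.of_trunc (L := 2 * T) hf (φ := fun t s => t - s)
    (by fun_prop)).intervalIntegrable (T := T) hx t
  rw [← intervalIntegral.integral_add_adjacent_intervals (b := t)
    (hI.mono_set (by rw [uIcc_of_le ht.1, uIcc_of_le (ht.1.trans ht.2)]; exact Icc_subset_Icc_right ht.2))
    (hI.mono_set (by rw [uIcc_of_le ht.2, uIcc_of_le (ht.1.trans ht.2)]; exact Icc_subset_Icc_left ht.1))]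
  have h1 : ∫ s in t..T, trunc (2 * T) f (t - s) * x s = 0 := by
    rw [intervalIntegral.integral_of_le ht.2]
    refine setIntegral_eq_zero_of_forall_eq_zero fun s hs => ?_
    rw [trunc, indicator_of_notMem, zero_mul]
    intro h; linarith [h.1, hs.1]
  rw [h1, add_zero]
  refine intervalIntegral.integral_congr fun s hs => ?_
  rw [uIcc_of_le ht.1] at hs
  rw [trunc, indicator_of_mem]
  constructor <;> linarith [hs.1, hs.2, ht.1, ht.2]

lemma integral_trunc_left {T : ℝ} (f y : ℝ → ℂ) (hf : Continuous f) (hy : Continuous y) {s : ℝ}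
    (hs : s ∈ Icc 0 T) :
    ∫ t in (0 : ℝ)..T, trunc (2 * T) f (t - s) * y t = ∫ t in s..T, f (t - s) * y t := by
  have hI := (BddKernel.of_trunc (L := 2 * T) hf (φ := fun s t => t - s)
    (by fun_prop)).intervalIntegrable (T := T) hy s
  rw [← intervalIntegral.integral_add_adjacent_intervals (b := s)
    (hI.mono_set (by rw [uIcc_of_le hs.1, uIcc_of_le (hs.1.trans hs.2)]; exact Icc_subset_Icc_right hs.2))
    (hI.mono_set (by rw [uIcc_of_le hs.2, uIcc_of_le (hs.1.trans hs.2)]; exact Icc_subset_Icc_left hs.1))]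
  have h1 : ∫ t in (0 : ℝ)..s, trunc (2 * T) f (t - s) * y t = 0 := by
    rw [intervalIntegral.integral_of_le hs.1, integral_Ioc_eq_integral_Ioo]
    refine setIntegral_eq_zero_of_forall_eq_zero fun t ht => ?_
    rw [trunc, indicator_of_notMem, zero_mul]
    intro h; linarith [h.1, ht.2]
  rw [h1, zero_add]
  refine intervalIntegral.integral_congr fun t ht => ?_
  rw [uIcc_of_le hs.2] at ht
  rw [trunc, indicator_of_mem]
  constructor <;> linarith [ht.1, ht.2, hs.1, hs.2]

section IBP

variable {T : ℝ} {f f' x x' y y' : ℝ → ℂ}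

/-- The kernel `f(t-s)`, cut off to `s ≤ t`, is annihilated by `∂ₜ + ∂ₛ`, so only the boundary
term at `t = T` survives when `x` vanishes at `0`. The jump of the kernel across the diagonal
contributes `f(0) ∫ x y` with opposite signs to the two pairings. -/
lemma pairing_lower (hT : 0 ≤ T) (hf' : Continuous f') (hf : ∀ t, HasDerivAt f (f' t) t)
    (hx' : Continuous x') (hx : ∀ t, HasDerivAt x (x' t) t)
    (hy' : Continuous y') (hy : ∀ t, HasDerivAt y (y' t) t) (hx0 : x 0 = 0) :
    pairing T (fun t s => trunc (2 * T) f (t - s)) x' y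
      + pairing T (fun t s => trunc (2 * T) f (t - s)) x y'
      = y T * ∫ s in (0 : ℝ)..T, f (T - s) * x s := by
  have hfc : Continuous f := continuous_iff_continuousAt.2 fun t => (hf t).continuousAt
  have hxc : Continuous x := continuous_iff_continuousAt.2 fun t => (hx t).continuousAt
  have hyc : Continuous y := continuous_iff_continuousAt.2 fun t => (hy t).continuousAt
  have hK : BddKernel (fun t s => trunc (2 * T) f (t - s)) := .of_trunc hfc (by fun_prop)
  have hK' : BddKernel (fun t s => trunc (2 * T) f' (t - s)) := .of_trunc hf' (by fun_prop)
  have e1 : pairing T (fun t s => trunc (2 * T) f (t - s)) x' y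
      = f 0 * (∫ t in (0 : ℝ)..T, x t * y t)
        + pairing T (fun t s => trunc (2 * T) f' (t - s)) x y := by
    rw [pairing, pairing, ← intervalIntegral.integral_const_mul,
      ← intervalIntegral.integral_add ((by fun_prop : Continuous _).intervalIntegrable _ _)
        (hK'.intervalIntegrable_outer hT hxc hyc)]
    refine intervalIntegral.integral_congr fun t ht => ?_
    rw [uIcc_of_le hT] at ht
    rw [integral_trunc_right f x' hfc hx' ht, integral_trunc_right f' x hf' hxc ht,
      intervalIntegral.integral_mul_deriv_eq_deriv_mul (u' := fun s => -f' (t - s))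
        (fun s _ => by simpa using (hf (t - s)).comp_const_sub t s) (fun s _ => hx s)
        ((by fun_prop : Continuous _).intervalIntegrable _ _) (hx'.intervalIntegrable _ _)]
    simp only [neg_mul, intervalIntegral.integral_neg, sub_self, hx0]
    ring
  have e2 : pairing T (fun t s => trunc (2 * T) f (t - s)) x y'
      = y T * (∫ s in (0 : ℝ)..T, f (T - s) * x s) - f 0 * (∫ t in (0 : ℝ)..T, x t * y t)
        - pairing T (fun t s => trunc (2 * T) f' (t - s)) x y := by
    rw [hK.pairing_flip hT hxc hy', hK'.pairing_flip hT hxc hyc]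
    rw [pairing, pairing, ← intervalIntegral.integral_const_mul,
      ← intervalIntegral.integral_const_mul,
      ← intervalIntegral.integral_sub ((by fun_prop : Continuous _).intervalIntegrable _ _)
        ((by fun_prop : Continuous _).intervalIntegrable _ _),
      ← intervalIntegral.integral_sub ((by fun_prop : Continuous _).intervalIntegrable _ _)
        (hK'.flip.intervalIntegrable_outer hT hyc hxc)]
    refine intervalIntegral.integral_congr fun s hs => ?_
    rw [uIcc_of_le hT] at hs
    rw [integral_trunc_left f y' hfc hy' hs, integral_trunc_left f' y hf' hyc hs,
      intervalIntegral.integral_mul_deriv_eq_deriv_mul (u' := fun t => f' (t - s))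
        (fun t _ => by simpa using (hf (t - s)).comp_sub_const t s) (fun s _ => hy s)
        ((by fun_prop : Continuous _).intervalIntegrable _ _) (hy'.intervalIntegrable _ _)]
    simp only [sub_self]
    ring
  rw [e1, e2]
  ring

/-- The counterpart of `pairing_lower` on `t ≤ s`, obtained by exchanging the two variables. -/
lemma pairing_upper (hT : 0 ≤ T) (hf' : Continuous f') (hf : ∀ t, HasDerivAt f (f' t) t)
    (hx' : Continuous x') (hx : ∀ t, HasDerivAt x (x' t) t)
    (hy' : Continuous y') (hy : ∀ t, HasDerivAt y (y' t) t) (hy0 : y 0 = 0) :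
    pairing T (fun t s => trunc (2 * T) f (s - t)) x' y
      + pairing T (fun t s => trunc (2 * T) f (s - t)) x y'
      = x T * ∫ t in (0 : ℝ)..T, f (T - t) * y t := by
  have hfc : Continuous f := continuous_iff_continuousAt.2 fun t => (hf t).continuousAt
  have hxc : Continuous x := continuous_iff_continuousAt.2 fun t => (hx t).continuousAt
  have hyc : Continuous y := continuous_iff_continuousAt.2 fun t => (hy t).continuousAt
  have hK : BddKernel (fun t s => trunc (2 * T) f (s - t)) := .of_trunc hfc (by fun_prop)
  rw [hK.pairing_flip hT hx' hyc, hK.pairing_flip hT hxc hy', add_comm]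
  exact pairing_lower hT hf' hf hy' hy hx' hx hy0

lemma integral_trunc_reflected {t : ℝ} (ht : t ∈ Icc 0 T) :
    ∫ s in (0 : ℝ)..T, trunc (2 * T) f (2 * T - t - s) * x s
      = ∫ s in (0 : ℝ)..T, f (2 * T - t - s) * x s := by
  refine intervalIntegral.integral_congr fun s hs => ?_
  rw [uIcc_of_le (ht.1.trans ht.2)] at hs
  rw [trunc, indicator_of_mem]
  constructor <;> linarith [hs.1, hs.2, ht.1, ht.2]

/-- Integration by parts in `s` for a kernel depending on `t + s`. -/
lemma pairing_reflected_aux (hT : 0 ≤ T) (hf' : Continuous f')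
    (hf : ∀ t, HasDerivAt f (f' t) t)
    (hx' : Continuous x') (hx : ∀ t, HasDerivAt x (x' t) t) (hyc : Continuous y)
    (hx0 : x 0 = 0) :
    pairing T (fun t s => trunc (2 * T) f (2 * T - t - s)) x' y
      = x T * (∫ t in (0 : ℝ)..T, f (T - t) * y t)
        + pairing T (fun t s => trunc (2 * T) f' (2 * T - t - s)) x y := by
  have hfc : Continuous f := continuous_iff_continuousAt.2 fun t => (hf t).continuousAt
  have hxc : Continuous x := continuous_iff_continuousAt.2 fun t => (hx t).continuousAt
  have hK' : BddKernel (fun t s => trunc (2 * T) f' (2 * T - t - s)) :=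
    .of_trunc hf' (by fun_prop)
  rw [pairing, pairing, ← intervalIntegral.integral_const_mul,
    ← intervalIntegral.integral_add ((by fun_prop : Continuous _).intervalIntegrable _ _)
      (hK'.intervalIntegrable_outer hT hxc hyc)]
  refine intervalIntegral.integral_congr fun t ht => ?_
  rw [uIcc_of_le hT] at ht
  rw [integral_trunc_reflected ht, integral_trunc_reflected ht,
    intervalIntegral.integral_mul_deriv_eq_deriv_mul (u' := fun s => -f' (2 * T - t - s))
      (fun s _ => by simpa using (hf (2 * T - t - s)).comp_const_sub (2 * T - t) s)
      (fun s _ => hx s)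
      ((by fun_prop : Continuous _).intervalIntegrable _ _) (hx'.intervalIntegrable _ _)]
  simp only [neg_mul, intervalIntegral.integral_neg, hx0,
    show 2 * T - t - T = T - t by ring]
  ring

/-- The kernel `f(2T-t-s)` is annihilated by `∂ₜ - ∂ₛ`, so only boundary terms at `T` survive. -/
lemma pairing_reflected (hT : 0 ≤ T) (hf' : Continuous f') (hf : ∀ t, HasDerivAt f (f' t) t)
    (hx' : Continuous x') (hx : ∀ t, HasDerivAt x (x' t) t)
    (hy' : Continuous y') (hy : ∀ t, HasDerivAt y (y' t) t) (hx0 : x 0 = 0) (hy0 : y 0 = 0) :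
    pairing T (fun t s => trunc (2 * T) f (2 * T - t - s)) x' y
      - pairing T (fun t s => trunc (2 * T) f (2 * T - t - s)) x y'
      = x T * (∫ t in (0 : ℝ)..T, f (T - t) * y t)
        - y T * ∫ s in (0 : ℝ)..T, f (T - s) * x s := by
  have hfc : Continuous f := continuous_iff_continuousAt.2 fun t => (hf t).continuousAt
  have hxc : Continuous x := continuous_iff_continuousAt.2 fun t => (hx t).continuousAt
  have hyc : Continuous y := continuous_iff_continuousAt.2 fun t => (hy t).continuousAt
  have hs : ∀ {g u v : ℝ → ℂ}, Continuous g → Continuous u → Continuous v →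
      pairing T (fun t s => trunc (2 * T) g (2 * T - t - s)) u v
        = pairing T (fun t s => trunc (2 * T) g (2 * T - t - s)) v u := by
    intro g u v hg hu hv
    rw [(BddKernel.of_trunc (φ := fun t s => 2 * T - t - s) hg (by fun_prop)).pairing_flip
      hT hu hv]
    simp only [sub_right_comm]
  rw [hs hfc hxc hy', pairing_reflected_aux hT hf' hf hx' hx hyc hx0,
    pairing_reflected_aux hT hf' hf hy' hy hxc hy0, hs hf' hyc hxc]
  ring

end IBP

/-! ### Reduction to scalar pairings -/

/-- Expansion of the form defined by a two-by-two system of kernels into scalar pairings. -/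
lemma form_expand {T : ℝ} (hT : 0 ≤ T) {r : ℝ → ℂ} {K : Fin 2 → Fin 2 → ℝ → ℝ → ℂ}
    (hK : ∀ i j, BddKernel (K i j))
    (hc : ∀ t ∈ Icc 0 T, ∀ s ∈ Icc 0 T, ∀ i j, cker T r t s i j = K i j t s)
    {u v : ℝ → Fin 2 → ℂ} {x y : Fin 2 → ℝ → ℂ} (hx : ∀ i, Continuous (x i))
    (hy : ∀ i, Continuous (y i)) (hu : ∀ t ∈ Icc 0 T, ∀ i, u t i = x i t)
    (hv : ∀ t ∈ Icc 0 T, ∀ i, (starRingEnd ℂ) (v t i) = y i t) :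
    (∫ t in (0 : ℝ)..T, ∑ i, Cop T r u t i * (starRingEnd ℂ) (v t i))
      = ∑ i, (2 * (∫ t in (0 : ℝ)..T, x i t * y i t)
          + ∑ j, pairing T (K i j) (x j) (y i)) := by
  have h1 : ∀ t ∈ Icc 0 T, ∀ i, Cop T r u t i
      = 2 * x i t + ∑ j, ∫ s in (0 : ℝ)..T, K i j t s * x j s := by
    intro t ht i
    have h2 : (∫ s in (0 : ℝ)..T, (cker T r t s).mulVec (u s))
        = ∫ s in (0 : ℝ)..T, fun i => ∑ j, K i j t s * x j s := by
      refine intervalIntegral.integral_congr fun s hs => ?_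
      rw [uIcc_of_le hT] at hs
      funext i
      simp only [Matrix.mulVec, dotProduct, hc t ht s hs, hu s hs]
    have hint : ∀ i j, IntervalIntegrable (fun s => K i j t s * x j s) volume 0 T :=
      fun i j => (hK i j).intervalIntegrable (hx j) t
    have h3 : (∫ s in (0 : ℝ)..T, fun i => ∑ j, K i j t s * x j s) i
        = ∫ s in (0 : ℝ)..T, ∑ j, K i j t s * x j s := by
      rw [intervalIntegral.integral_of_le hT, intervalIntegral.integral_of_le hT]
      refine eval_integral (E := fun _ : Fin 2 => ℂ) (μ := volume.restrict (Ioc 0 T))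
        (f := fun s i => ∑ j, K i j t s * x j s) (fun i => ?_) i
      exact integrable_finsetSum _ fun j _ =>
        (intervalIntegrable_iff_integrableOn_Ioc_of_le hT).1 (hint i j)
    rw [Cop, h2, Pi.add_apply, h3, intervalIntegral.integral_finsetSum fun j _ => hint i j,
      Pi.smul_apply, hu t ht, smul_eq_mul]
  have h4 : (∫ t in (0 : ℝ)..T, ∑ i, Cop T r u t i * (starRingEnd ℂ) (v t i))
      = ∫ t in (0 : ℝ)..T, ∑ i, (2 * (x i t * y i t)
          + ∑ j, (∫ s in (0 : ℝ)..T, K i j t s * x j s) * y i t) := by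
    refine intervalIntegral.integral_congr fun t ht => ?_
    rw [uIcc_of_le hT] at ht
    refine Finset.sum_congr rfl fun i _ => ?_
    rw [h1 t ht, hv t ht, add_mul, Finset.sum_mul, mul_assoc]
  have ha : ∀ i, IntervalIntegrable (fun t => 2 * (x i t * y i t)) volume 0 T := fun i =>
    (continuous_const.mul ((hx i).mul (hy i))).intervalIntegrable _ _
  have hb : ∀ i j, IntervalIntegrable
      (fun t => (∫ s in (0 : ℝ)..T, K i j t s * x j s) * y i t) volume 0 T := fun i j =>
    (hK i j).intervalIntegrable_outer hT (hx j) (hy i)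
  have hb' : ∀ i, IntervalIntegrable
      (fun t => ∑ j, (∫ s in (0 : ℝ)..T, K i j t s * x j s) * y i t) volume 0 T := fun i => by
    simpa only [Finset.sum_fn] using IntervalIntegrable.sum Finset.univ fun j _ => hb i j
  rw [h4, intervalIntegral.integral_finsetSum fun i _ => (ha i).add (hb' i)]
  refine Finset.sum_congr rfl fun i _ => ?_
  rw [intervalIntegral.integral_add (ha i) (hb' i), intervalIntegral.integral_const_mul,
    intervalIntegral.integral_finsetSum fun j _ => hb i j]
  rfl

/-! ### Symmetry -/

/-- Symmetry of the operator `-iQ d/dt` with respect to the bilinear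
form determined by the connecting operator `C` built from `r`. -/
theorem stmt16 (T : ℝ) (hT : 0 < T) (r : ℝ → ℂ)
    (hr : ContDiffOn ℝ 1 r (Icc 0 (2 * T))) (hr0 : ∀ t < (0 : ℝ), r t = 0)
    (a b : ℝ → Fin 2 → ℂ)
    (ha : ContDiffOn ℝ 1 a (Icc 0 T)) (hb : ContDiffOn ℝ 1 b (Icc 0 T))
    (ha0 : a 0 = 0) (ha'0 : derivWithin a (Icc (0 : ℝ) T) 0 = 0)
    (hb0 : b 0 = 0) (hb'0 : derivWithin b (Icc (0 : ℝ) T) 0 = 0)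
    (haT : a T 0 + a T 1 = 0) (hbT : b T 0 + b T 1 = 0) :
    (∫ t in (0 : ℝ)..T, ∑ i, Cop T r (DQ T a) t i * (starRingEnd ℂ) (b t i))
      = ∫ t in (0 : ℝ)..T, ∑ i, Cop T r a t i * (starRingEnd ℂ) (DQ T b t i) := by
  obtain ⟨ρ, ρ', hρ', hρ, hrρ, -⟩ := exists_extension (by positivity) hr
  obtain ⟨α, α', hα'c, hαd, haα, haα'⟩ := exists_extension hT ha
  obtain ⟨β, β', hβ'c, hβd, hbβ, hbβ'⟩ := exists_extension hT hb
  have m0 : (0 : ℝ) ∈ Icc 0 T := ⟨le_rfl, hT.le⟩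
  have mT : T ∈ Icc 0 T := ⟨hT.le, le_rfl⟩
  -- Coordinate functions, with `b` conjugated.
  set x : Fin 2 → ℝ → ℂ := fun i t => α t i with hxdef
  set x' : Fin 2 → ℝ → ℂ := fun i t => α' t i with hx'def
  set y : Fin 2 → ℝ → ℂ := fun i t => (starRingEnd ℂ) (β t i) with hydef
  set y' : Fin 2 → ℝ → ℂ := fun i t => (starRingEnd ℂ) (β' t i) with hy'def
  have hx' : ∀ i, Continuous (x' i) := fun i => (continuous_apply i).comp hα'c
  have hy' : ∀ i, Continuous (y' i) := fun i =>
    Complex.continuous_conj.comp ((continuous_apply i).comp hβ'c)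
  have hx : ∀ i t, HasDerivAt (x i) (x' i t) t := fun i t => hasDerivAt_pi.1 (hαd t) i
  have hy : ∀ i t, HasDerivAt (y i) (y' i t) t := fun i t =>
    (hasDerivAt_pi.1 (hβd t) i).star
  have hxc : ∀ i, Continuous (x i) := fun i =>
    continuous_iff_continuousAt.2 fun t => (hx i t).continuousAt
  have hyc : ∀ i, Continuous (y i) := fun i =>
    continuous_iff_continuousAt.2 fun t => (hy i t).continuousAt
  have hx0 : ∀ i, x i 0 = 0 := fun i => by simp [hxdef, ← haα 0 m0, ha0]
  have hy0 : ∀ i, y i 0 = 0 := fun i => by simp [hydef, ← hbβ 0 m0, hb0]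
  have hxT : x 1 T = -x 0 T := by
    simp only [hxdef, ← haα T mT]; linear_combination haT
  have hyT : y 1 T = -y 0 T := by
    simp only [hydef, ← hbβ T mT, ← map_neg]
    congr 1; linear_combination hbT
  set σ : ℝ → ℂ := fun t => (starRingEnd ℂ) (ρ t) with hσdef
  set σ' : ℝ → ℂ := fun t => (starRingEnd ℂ) (ρ' t) with hσ'def
  have hσ' : Continuous σ' := Complex.continuous_conj.comp hρ'
  have hσ : ∀ t, HasDerivAt σ (σ' t) t := fun t => (hρ t).star
  have hρc : Continuous ρ := continuous_iff_continuousAt.2 fun t => (hρ t).continuousAt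
  have hσc : Continuous σ := continuous_iff_continuousAt.2 fun t => (hσ t).continuousAt
  have hrt : ∀ t ≤ 2 * T, r t = trunc (2 * T) ρ t := by
    intro t ht
    rcases lt_or_ge t 0 with h | h
    · rw [hr0 t h, trunc, indicator_of_notMem fun h' => absurd h'.1 (not_le.2 h)]
    · have hm : t ∈ Icc 0 (2 * T) := ⟨h, ht⟩
      rw [trunc, indicator_of_mem hm, hrρ t hm]
  have hst : ∀ t ≤ 2 * T, (starRingEnd ℂ) (r t) = trunc (2 * T) σ t := by
    intro t ht
    rw [hrt t ht]
    simp only [trunc, indicator]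
    split_ifs <;> simp [hσdef]
  set K₀ : (ℝ → ℂ) → ℝ → ℝ → ℂ := fun f t s => trunc (2 * T) f (t - s) with hK₀
  set K₁ : (ℝ → ℂ) → ℝ → ℝ → ℂ := fun f t s => trunc (2 * T) f (s - t) with hK₁
  set K₂ : (ℝ → ℂ) → ℝ → ℝ → ℂ := fun f t s => trunc (2 * T) f (2 * T - t - s) with hK₂
  have b₀ : ∀ {f}, Continuous f → BddKernel (K₀ f) := fun h => .of_trunc h (by fun_prop)
  have b₁ : ∀ {f}, Continuous f → BddKernel (K₁ f) := fun h => .of_trunc h (by fun_prop)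
  have b₂ : ∀ {f}, Continuous f → BddKernel (K₂ f) := fun h => .of_trunc h (by fun_prop)
  let K : Fin 2 → Fin 2 → ℝ → ℝ → ℂ :=
    ![![fun t s => -Complex.I * K₀ ρ t s + Complex.I * K₁ σ t s,
        fun t s => -Complex.I * K₂ σ t s],
      ![fun t s => Complex.I * K₂ ρ t s,
        fun t s => Complex.I * K₀ σ t s + -Complex.I * K₁ ρ t s]]
  have hK : ∀ i j, BddKernel (K i j) := by
    intro i j
    fin_cases i <;> fin_cases j
    · exact ((b₀ hρc).const_mul _).add ((b₁ hσc).const_mul _)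
    · exact (b₂ hσc).const_mul _
    · exact (b₂ hρc).const_mul _
    · exact ((b₀ hσc).const_mul _).add ((b₁ hρc).const_mul _)
  have hc : ∀ t ∈ Icc 0 T, ∀ s ∈ Icc 0 T, ∀ i j, cker T r t s i j = K i j t s := by
    intro t ht s hs i j
    have l1 : t - s ≤ 2 * T := by linarith [ht.2, hs.1, ht.1]
    have l2 : s - t ≤ 2 * T := by linarith [hs.2, ht.1, hs.1]
    have l3 : 2 * T - t - s ≤ 2 * T := by linarith [hs.1, ht.1]
    fin_cases i <;> fin_cases j <;>
      simp [cker, K, hK₀, hK₁, hK₂, hst _ l1, hst _ l2, hst _ l3, ← hrt _ l1, ← hrt _ l2,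
        ← hrt _ l3] <;> ring
  let q : Fin 2 → ℂ := ![1, -1]
  have hDQ : ∀ {c : ℝ → Fin 2 → ℂ} (t i),
      DQ T c t i = -Complex.I * q i * derivWithin c (Icc 0 T) t i := by
    intro c t i
    fin_cases i <;> simp [DQ, Qmat, q, dotProduct, Fin.sum_univ_two]
  have hL := form_expand (r := r) (u := DQ T a) (v := b)
    (x := fun i t => -Complex.I * q i * x' i t) (y := y) hT.le hK hc
    (fun i => continuous_const.mul (hx' i)) hyc
    (fun t ht i => by rw [hDQ, haα' t ht]) (fun t ht i => by rw [hbβ t ht])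
  have hR := form_expand (r := r) (u := a) (v := DQ T b)
    (x := x) (y := fun i t => Complex.I * q i * y' i t) hT.le hK hc
    hxc (fun i => continuous_const.mul (hy' i))
    (fun t ht i => by rw [haα t ht])
    (fun t ht i => by
      rw [hDQ, hbβ' t ht]
      fin_cases i <;> simp [q, hy'def])
  rw [hL, hR]
  have pl : ∀ (k : ℝ → ℝ → ℂ) (c : ℂ) (u v : ℝ → ℂ),
      pairing T k (fun t => c * u t) v = c * pairing T k u v := by
    intro k c u v
    simp only [pairing, mul_left_comm _ c, mul_assoc c, intervalIntegral.integral_const_mul]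
  have pr : ∀ (k : ℝ → ℝ → ℂ) (c : ℂ) (u v : ℝ → ℂ),
      pairing T k u (fun t => c * v t) = c * pairing T k u v := by
    intro k c u v
    simp only [pairing, mul_left_comm _ c, intervalIntegral.integral_const_mul]
  have hK00 : ∀ {u v : ℝ → ℂ}, Continuous u → Continuous v → pairing T (K 0 0) u v
      = -Complex.I * pairing T (K₀ ρ) u v + Complex.I * pairing T (K₁ σ) u v := by
    intro u v hu hv
    rw [← BddKernel.pairing_const_mul, ← BddKernel.pairing_const_mul]
    exact BddKernel.pairing_add hT.le ((b₀ hρc).const_mul _) ((b₁ hσc).const_mul _) hu hv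
  have hK11 : ∀ {u v : ℝ → ℂ}, Continuous u → Continuous v → pairing T (K 1 1) u v
      = Complex.I * pairing T (K₀ σ) u v + -Complex.I * pairing T (K₁ ρ) u v := by
    intro u v hu hv
    rw [← BddKernel.pairing_const_mul, ← BddKernel.pairing_const_mul]
    exact BddKernel.pairing_add hT.le ((b₀ hσc).const_mul _) ((b₁ hρc).const_mul _) hu hv
  have hK01 : ∀ u v : ℝ → ℂ, pairing T (K 0 1) u v = -Complex.I * pairing T (K₂ σ) u v :=
    fun u v => BddKernel.pairing_const_mul _ u v
  have hK10 : ∀ u v : ℝ → ℂ, pairing T (K 1 0) u v = Complex.I * pairing T (K₂ ρ) u v :=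
    fun u v => BddKernel.pairing_const_mul _ u v
  have q0 : q 0 = 1 := rfl
  have q1 : q 1 = -1 := rfl
  simp only [Fin.sum_univ_two, pl, pr, hK00 (hx' 0) (hyc 0), hK00 (hxc 0) (hy' 0),
    hK11 (hx' 1) (hyc 1), hK11 (hxc 1) (hy' 1), hK01, hK10, mul_left_comm (x _ _) (_ * _) _,
    mul_assoc (_ * _) (x' _ _), intervalIntegral.integral_const_mul, q0, q1]
  have P : ∀ i, (∫ t in (0 : ℝ)..T, x i t * y' i t)
      = x i T * y i T - ∫ t in (0 : ℝ)..T, x' i t * y i t := fun i => by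
    rw [intervalIntegral.integral_mul_deriv_eq_deriv_mul (fun t _ => hx i t) (fun t _ => hy i t)
      ((hx' i).intervalIntegrable _ _) ((hy' i).intervalIntegrable _ _), hx0]
    ring
  have A0 := pairing_lower hT.le hρ' hρ (hx' 0) (hx 0) (hy' 0) (hy 0) (hx0 0)
  have A1 := pairing_upper hT.le hσ' hσ (hx' 0) (hx 0) (hy' 0) (hy 0) (hy0 0)
  have B0 := pairing_lower hT.le hσ' hσ (hx' 1) (hx 1) (hy' 1) (hy 1) (hx0 1)
  have B1 := pairing_upper hT.le hρ' hρ (hx' 1) (hx 1) (hy' 1) (hy 1) (hy0 1)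
  have C0 := pairing_reflected hT.le hσ' hσ (hx' 1) (hx 1) (hy' 0) (hy 0) (hx0 1) (hy0 0)
  have C1 := pairing_reflected hT.le hρ' hρ (hx' 0) (hx 0) (hy' 1) (hy 1) (hx0 0) (hy0 1)
  rw [P 0, P 1]
  -- The factor `I ^ 2` is the product of the `I` in the kernel and the one in `-iQ d/dt`.
  rw [hyT] at B0 C1 ⊢
  rw [hxT] at B1 C0 ⊢
  linear_combination Complex.I ^ 2 * (A0 - A1 + B0 - B1 - C0 - C1)
end
end

section
/- Let T > 0 and let m, n : {(x,s) : 0 ≤ x ≤ s ≤ T} → M₂(ℂ) be C¹ and satisfy m(x,τ) + n(x,τ) + ∫_x^τ m(x,s) n(s,τ) ds = 0 for all 0 ≤ x ≤ τ ≤ T. Let κ := [[1,1],[i,−i]], Q := diag(1,−1), (M y)(x) := ∫_x^T m(x,s) y(s) ds, (N y)(x) := ∫_x^T n(x,s) y(s) ds, and (Y a)(x) := a(T−x). Then there exists a continuous h : {(x,s) : 0 ≤ x ≤ s ≤ T} → M₂(ℂ), depending only on m and n, such that for every y ∈ C¹([0,T]; ℂ²) with y(T) = 0, ( κ (I + M)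 Y (−i Q d/dt) Y⁻¹ (I + N) κ⁻¹ y )(x) = J y′(x) + V(x) y(x) + ∫_x^T h(x,s) y(s) ds for all x ∈ [0,T], where V(x) := [[p(x), q(x)], [q(x), −p(x)]] with p(x) := i( m₁₂(x,x) − m₂₁(x,x) ) and q(x) := −( m₁₂(x,x) + m₂₁(x,x) ). -/
/-!
Substitute `u = κ⁻¹ y` and `D = iQ`. The reflection `t = T - x` turns `-iQ d/dt` into `D d/dx`, so
the operator inside `κ … κ⁻¹` is `u ↦ (I + M) D d/dx (I + N) u`. Three facts reduce it to a
first-order operator with a triangular integral remainder: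

* the Leibniz rule `hasDerivWithinAt_volterra`,
  `d/dx ∫_x^T n(x,s) u(s) ds = -n(x,x) u(x) + ∫_x^T n_x(x,s) u(s) ds`;
* integration by parts `volterra_by_parts`, which removes the derivative from
  `∫_x^T m(x,s) D u'(s) ds` and, as `u(T) = 0`, leaves only the boundary term `-m(x,x) D u(x)`;
* the exchange of integrals over a triangle, `integral_triangle_swap`, for the double integral
  coming from `M D (d/dx) N`.

The terms of order zero add up to `-D n(x,x) - m(x,x) D`. The kernel relation on the diagonal reads
`n(x,x) = -m(x,x)`, so this is the commutator `[D, m(x,x)]`, and conjugating `D` and the commutator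
by `κ` gives `J` and `V(x)`. The remainder has the kernel (`remKernel`)
`D n_x(x,τ) - m_s(x,τ) D - m(x,τ) D n(τ,τ) + ∫_x^τ m(x,ξ) D n_x(ξ,τ) dξ`, conjugated by `κ`.

Since `m` and `n` are only controlled on the closed triangle, the kernels and their partial
derivatives are extended to continuous functions on the plane by composing with a retraction onto the
triangle (`exists_extension`); every integral below is then one of a globally continuous function.
-/

open MeasureTheory Set

noncomputable section

/-- The matrix `J = [[0,1],[-1,0]]`. -/
def Jmat : Matrix (Fin 2) (Fin 2) ℂ := !![0, 1; -1, 0]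

/-- The matrix `κ = [[1,1],[i,-i]]`. -/
def kappaMat : Matrix (Fin 2) (Fin 2) ℂ := !![1, 1; Complex.I, -Complex.I]

/-- The domain `{(x,s) : 0 ≤ x ≤ s ≤ T}`. -/
def DeltaT (T : ℝ) : Set (ℝ × ℝ) := {z | 0 ≤ z.1 ∧ z.1 ≤ z.2 ∧ z.2 ≤ T}

/-- The composite operator `κ (I+M) Y (-iQ d/dt) Y⁻¹ (I+N) κ⁻¹`. -/
def Lop17 (T : ℝ) (m n : ℝ → ℝ → Matrix (Fin 2) (Fin 2) ℂ)
    (y : ℝ → Fin 2 → ℂ) : ℝ → Fin 2 → ℂ :=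
  -- apply `κ⁻¹` pointwise
  let z₁ : ℝ → Fin 2 → ℂ := fun x => (kappaMat⁻¹).mulVec (y x)
  -- apply `I + N`
  let z₂ : ℝ → Fin 2 → ℂ := fun x => z₁ x + ∫ s in x..T, (n x s).mulVec (z₁ s)
  -- apply `Y⁻¹`
  let z₃ : ℝ → Fin 2 → ℂ := fun t => z₂ (T - t)
  -- apply `-iQ d/dt`
  let z₄ : ℝ → Fin 2 → ℂ :=
    fun t => (-Complex.I) • Qmat.mulVec (derivWithin z₃ (Icc (0 : ℝ) T) t)
  -- apply `Y`
  let z₅ : ℝ → Fin 2 → ℂ := fun x => z₄ (T - x)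
  -- apply `I + M`
  let z₆ : ℝ → Fin 2 → ℂ := fun x => z₅ x + ∫ s in x..T, (m x s).mulVec (z₅ s)
  -- apply `κ` pointwise
  fun x => kappaMat.mulVec (z₆ x)

/-- The (a priori complex-valued) potential entries read off from the kernel `m`. -/
def pEntry (m : ℝ → ℝ → Matrix (Fin 2) (Fin 2) ℂ) (x : ℝ) : ℂ :=
  Complex.I * (m x x 0 1 - m x x 1 0)

def qEntry (m : ℝ → ℝ → Matrix (Fin 2) (Fin 2) ℂ) (x : ℝ) : ℂ :=
  -(m x x 0 1 + m x x 1 0)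

def VofM (m : ℝ → ℝ → Matrix (Fin 2) (Fin 2) ℂ) (x : ℝ) : Matrix (Fin 2) (Fin 2) ℂ :=
  !![pEntry m x, qEntry m x; qEntry m x, -(pEntry m x)]

/-! ### Parametric integrals and the triangular exchange -/

/-- An integral of a jointly continuous function with continuously varying endpoints is
continuous in the parameter. -/
theorem continuous_integral_bounds {X E : Type*} [TopologicalSpace X]
    [NormedAddCommGroup E] [NormedSpace ℝ E]
    {f : X → ℝ → E} (hf : Continuous fun p : X × ℝ => f p.1 p.2) {a b : X → ℝ}
    (ha : Continuous a) (hb : Continuous b) :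
    Continuous fun x => ∫ t in a x..b x, f x t := by
  have key : ∀ c : X → ℝ, Continuous c → Continuous fun x => ∫ t in (0:ℝ)..c x, f x t :=
    fun c hc => intervalIntegral.continuous_parametric_intervalIntegral_of_continuous hf hc
  have : (fun x => ∫ t in a x..b x, f x t)
      = fun x => (∫ t in (0:ℝ)..b x, f x t) - ∫ t in (0:ℝ)..a x, f x t := by
    funext x
    have hx : Continuous (f x) := by fun_prop
    exact (intervalIntegral.integral_interval_sub_left (hx.intervalIntegrable _ _)
      (hx.intervalIntegrable _ _)).symm
  rw [this]
  exact (key b hb).sub (key a ha)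

/-- Fubini's theorem on the triangle `a ≤ s ≤ τ ≤ b`, obtained from the one on the square by
multiplying with the indicator of `s < τ`. -/
theorem integral_triangle_swap {E : Type*} [NormedAddCommGroup E] [NormedSpace ℝ E]
    {F : ℝ → ℝ → E} (hF : Continuous fun z : ℝ × ℝ => F z.1 z.2) {a b : ℝ} (hab : a ≤ b) :
    ∫ s in a..b, ∫ τ in s..b, F s τ = ∫ τ in a..b, ∫ s in a..τ, F s τ := by
  set S : Set (ℝ × ℝ) := {z | z.1 < z.2} with hS
  have hSm : MeasurableSet S := measurableSet_lt measurable_fst measurable_snd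
  set G : ℝ → ℝ → E := fun s τ => S.indicator (fun z : ℝ × ℝ => F z.1 z.2) (s, τ) with hG
  have hint : IntegrableOn (Function.uncurry G) (uIoc a b ×ˢ uIoc a b) (volume.prod volume) := by
    have : Function.uncurry G = S.indicator (fun z : ℝ × ℝ => F z.1 z.2) := by
      funext ⟨s, τ⟩; rfl
    rw [this]
    refine IntegrableOn.indicator ?_ hSm
    refine IntegrableOn.mono_set (t := Icc a b ×ˢ Icc a b) ?_ ?_
    · exact hF.continuousOn.integrableOn_compact (isCompact_Icc.prod isCompact_Icc)
    · rw [uIoc_of_le hab]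
      exact prod_mono Ioc_subset_Icc_self Ioc_subset_Icc_self
  have hsw := intervalIntegral_intervalIntegral_swap (F := G) hint
  have h1 : ∀ s ∈ uIcc a b, ∫ τ in a..b, G s τ = ∫ τ in s..b, F s τ := by
    intro s hs
    rw [uIcc_of_le hab] at hs
    rw [intervalIntegral.integral_of_le hab, intervalIntegral.integral_of_le hs.2]
    have : (fun τ => G s τ) = (Ioi s).indicator (F s) := by
      funext τ
      by_cases h : s < τ <;> simp [hG, hS, indicator, h]
    rw [this, setIntegral_indicator measurableSet_Ioi, Ioc_inter_Ioi, sup_eq_right.2 hs.1]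
  have h2 : ∀ τ ∈ uIcc a b, ∫ s in a..b, G s τ = ∫ s in a..τ, F s τ := by
    intro τ hs
    rw [uIcc_of_le hab] at hs
    have : (fun s => G s τ) = (Iio τ).indicator fun s => F s τ := by
      funext s
      by_cases h : s < τ <;> simp [hG, hS, indicator, h]
    have hset : Ioc a b ∩ Iio τ = Ioo a τ := by
      ext s
      exact ⟨fun h => ⟨h.1.1, h.2⟩, fun h => ⟨⟨h.1, h.2.le.trans hs.2⟩, h.2⟩⟩
    rw [intervalIntegral.integral_of_le hab, intervalIntegral.integral_of_le hs.1, this,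
      setIntegral_indicator measurableSet_Iio, hset, integral_Ioc_eq_integral_Ioo]
  rw [← intervalIntegral.integral_congr h1, ← intervalIntegral.integral_congr h2, hsw]

/-! ### Continuous extension from the triangle -/

/-- A continuous retraction of the plane onto the triangle `DeltaT T`. -/
def retr (T : ℝ) (z : ℝ × ℝ) : ℝ × ℝ :=
  (max 0 (min T z.1), max (max 0 (min T z.1)) (min T z.2))

theorem continuous_retr (T : ℝ) : Continuous (retr T) := by
  unfold retr; fun_prop

theorem retr_mem {T : ℝ} (hT : 0 ≤ T) (z : ℝ × ℝ) : retr T z ∈ DeltaT T := by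
  simp [retr, DeltaT, hT]

theorem retr_eq {T : ℝ} {z : ℝ × ℝ} (hz : z ∈ DeltaT T) : retr T z = z := by
  obtain ⟨h1, h2, h3⟩ := hz
  ext <;> simp [retr, h1, h2, h3, h2.trans h3]

theorem uniqueDiffOn_DeltaT {T : ℝ} (hT : 0 < T) : UniqueDiffOn ℝ (DeltaT T) := by
  refine uniqueDiffOn_convex ?_ ⟨(T / 3, 2 * T / 3), ?_⟩
  · rintro ⟨x, s⟩ ⟨h1, h2, h3⟩ ⟨x', s'⟩ ⟨h1', h2', h3'⟩ a b ha hb hab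
    simp only at h1 h2 h3 h1' h2' h3'
    refine ⟨?_, ?_, ?_⟩
    · simp; positivity
    · simp; gcongr
    · simp
      calc a * s + b * s' ≤ a * T + b * T := by gcongr
        _ = T := by rw [← add_mul, hab, one_mul]
  · rw [mem_interior]
    refine ⟨{z | 0 < z.1} ∩ ({z | z.1 < z.2} ∩ {z | z.2 < T}), ?_, ?_, ?_⟩
    · rintro z ⟨h1, h2, h3⟩; exact ⟨le_of_lt h1, le_of_lt h2, le_of_lt h3⟩
    · exact (isOpen_lt continuous_const continuous_fst).inter
        ((isOpen_lt continuous_fst continuous_snd).inter (isOpen_lt continuous_snd continuous_const))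
    · refine ⟨?_, ?_, ?_⟩ <;> simp <;> linarith

/-- A `C¹` function on the triangle and its two partial derivatives extend continuously to the
plane. The derivatives hold on horizontal and vertical lines away from the endpoints of their
intersections with the triangle, including lines lying in its boundary. -/
theorem exists_extension_s17 {T : ℝ} (hT : 0 < T) {f : ℝ × ℝ → ℂ} (hf : ContDiffOn ℝ 1 f (DeltaT T)) :
    ∃ f0 f1 f2 : ℝ × ℝ → ℂ, Continuous f0 ∧ Continuous f1 ∧ Continuous f2 ∧
      (∀ z ∈ DeltaT T, f0 z = f z) ∧
      (∀ x s, 0 < x → x < s → s ≤ T → HasDerivAt (fun x' => f0 (x', s)) (f1 (x, s)) x) ∧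
      (∀ x s, 0 ≤ x → x < s → s < T → HasDerivAt (fun s' => f0 (x, s')) (f2 (x, s)) s) := by
  have hu := uniqueDiffOn_DeltaT hT
  have hr := continuous_retr T
  have hcf := hf.continuousOn_fderivWithin hu le_rfl
  have hg : Continuous fun z => fderivWithin ℝ f (DeltaT T) (retr T z) :=
    hcf.comp_continuous hr (retr_mem hT.le)
  refine ⟨fun z => f (retr T z), fun z => fderivWithin ℝ f (DeltaT T) (retr T z) (1, 0),
    fun z => fderivWithin ℝ f (DeltaT T) (retr T z) (0, 1),
    hf.continuousOn.comp_continuous hr (retr_mem hT.le), by fun_prop, by fun_prop,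
    fun z hz => by simp only [retr_eq hz], ?_, ?_⟩
  · intro x s h0 hxs hs
    have hz : ((x, s) : ℝ × ℝ) ∈ DeltaT T := ⟨h0.le, hxs.le, hs⟩
    have hd := ((hf.differentiableOn one_ne_zero) _ hz).hasFDerivWithinAt
    have hc : HasDerivWithinAt (fun x' : ℝ => ((x', s) : ℝ × ℝ)) (1, 0) (Icc 0 s) x :=
      (hasDerivWithinAt_id x _).prodMk (hasDerivWithinAt_const _ _ _)
    have hm : MapsTo (fun x' : ℝ => ((x', s) : ℝ × ℝ)) (Icc 0 s) (DeltaT T) :=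
      fun x' hx' => ⟨hx'.1, hx'.2, hs⟩
    have := (hd.comp_hasDerivWithinAt x hc hm).hasDerivAt (Icc_mem_nhds h0 hxs)
    simp only [retr_eq hz]
    refine this.congr_of_eventuallyEq ?_
    filter_upwards [Icc_mem_nhds h0 hxs] with x' hx'
    simp only [retr_eq (hm hx'), Function.comp]
  · intro x s h0 hxs hs
    have hz : ((x, s) : ℝ × ℝ) ∈ DeltaT T := ⟨h0, hxs.le, hs.le⟩
    have hd := ((hf.differentiableOn one_ne_zero) _ hz).hasFDerivWithinAt
    have hc : HasDerivWithinAt (fun s' : ℝ => ((x, s') : ℝ × ℝ)) (0, 1) (Icc x T) s :=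
      (hasDerivWithinAt_const _ _ _).prodMk (hasDerivWithinAt_id s _)
    have hm : MapsTo (fun s' : ℝ => ((x, s') : ℝ × ℝ)) (Icc x T) (DeltaT T) :=
      fun s' hs' => ⟨h0, hs'.1, hs'.2⟩
    have := (hd.comp_hasDerivWithinAt s hc hm).hasDerivAt (Icc_mem_nhds hxs hs)
    simp only [retr_eq hz]
    refine this.congr_of_eventuallyEq ?_
    filter_upwards [Icc_mem_nhds hxs hs] with s' hs'
    simp only [retr_eq (hm hs'), Function.comp]

/-! ### Matrix-valued kernels -/

open Matrix in
/-- Product rule. The derivative of the matrix factor is taken entrywise, which avoids choosing a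
norm on matrices. -/
theorem hasDerivAt_mulVec {A : ℝ → Matrix (Fin 2) (Fin 2) ℂ} {A' : Matrix (Fin 2) (Fin 2) ℂ}
    {w : ℝ → Fin 2 → ℂ} {w' : Fin 2 → ℂ} {t : ℝ}
    (hA : ∀ i j, HasDerivAt (fun t => A t i j) (A' i j) t) (hw : HasDerivAt w w' t) :
    HasDerivAt (fun t => A t *ᵥ w t) (A' *ᵥ w t + A t *ᵥ w') t := by
  rw [hasDerivAt_pi] at hw ⊢
  intro i
  simp only [Matrix.mulVec, dotProduct, Pi.add_apply, ← Finset.sum_add_distrib]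
  exact HasDerivAt.fun_sum fun j _ => (hA i j).mul (hw j)

theorem integral_apply {f : ℝ → Fin 2 → ℂ} (hf : Continuous f) (a b : ℝ) (i : Fin 2) :
    (∫ s in a..b, f s) i = ∫ s in a..b, f s i :=
  ((ContinuousLinearMap.proj (R := ℝ) (φ := fun _ : Fin 2 => ℂ) i).intervalIntegral_comp_comm
    (hf.intervalIntegrable a b)).symm

open Matrix in
theorem mulVec_integral (B : Matrix (Fin 2) (Fin 2) ℂ) {f : ℝ → Fin 2 → ℂ} (hf : Continuous f)
    (a b : ℝ) : B *ᵥ (∫ s in a..b, f s) = ∫ s in a..b, B *ᵥ f s :=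
  ((LinearMap.toContinuousLinearMap (Matrix.mulVecLin B)).intervalIntegral_comp_comm
    (hf.intervalIntegrable a b)).symm

open Matrix in
theorem integral_mulVec {A : ℝ → Matrix (Fin 2) (Fin 2) ℂ} (hA : Continuous A) (v : Fin 2 → ℂ)
    (a b : ℝ) : (Matrix.of fun i j => ∫ s in a..b, A s i j) *ᵥ v = ∫ s in a..b, A s *ᵥ v := by
  have hA' : ∀ i j, Continuous fun s => A s i j := fun i j => hA.matrix_elem i j
  ext i
  rw [integral_apply (by fun_prop)]
  simp only [Matrix.mulVec, dotProduct, Matrix.of_apply]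
  rw [intervalIntegral.integral_finsetSum]
  · simp only [intervalIntegral.integral_mul_const]
  · intro j _
    exact ((hA' i j).mul continuous_const).intervalIntegrable _ _

open Matrix in
/-- Leibniz rule for a Volterra integral. Writing `N x s = N s s - ∫_x^s N1 ξ s dξ` and exchanging
integrals exhibits the Volterra integral as `∫_x^T g` with `g` continuous, to which the fundamental
theorem of calculus applies. -/
theorem hasDerivWithinAt_volterra {T : ℝ} {N N1 : ℝ → ℝ → Matrix (Fin 2) (Fin 2) ℂ}
    (hN : Continuous fun z : ℝ × ℝ => N z.1 z.2) (hN1 : Continuous fun z : ℝ × ℝ => N1 z.1 z.2)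
    (hd : ∀ i j x s, 0 < x → x < s → s ≤ T → HasDerivAt (fun x' => N x' s i j) (N1 x s i j) x)
    {u : ℝ → Fin 2 → ℂ} (hu : Continuous u) {x : ℝ} (hx : x ∈ Icc 0 T) :
    HasDerivWithinAt (fun x => ∫ s in x..T, N x s *ᵥ u s)
      (-(N x x *ᵥ u x) + ∫ s in x..T, N1 x s *ᵥ u s) (Icc 0 T) x := by
  have hF : Continuous fun z : ℝ × ℝ => N1 z.1 z.2 *ᵥ u z.2 := by fun_prop
  have hNd : Continuous fun s => N s s := hN.comp (continuous_id.prodMk continuous_id)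
  have hI : Continuous fun s => ∫ τ in s..T, N1 s τ *ᵥ u τ :=
    continuous_integral_bounds hF continuous_id continuous_const
  have hNu : Continuous fun s => N s s *ᵥ u s := by fun_prop
  set g : ℝ → Fin 2 → ℂ := fun s => N s s *ᵥ u s - ∫ τ in s..T, N1 s τ *ᵥ u τ with hg
  have hgc : Continuous g := hNu.sub hI
  have key : ∀ x ∈ Icc 0 T, ∫ s in x..T, N x s *ᵥ u s = ∫ s in x..T, g s := by
    intro x hx
    have h1 : ∀ s ∈ uIcc x T, N x s *ᵥ u s = N s s *ᵥ u s - ∫ ξ in x..s, N1 ξ s *ᵥ u s := by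
      intro s hs
      rw [uIcc_of_le hx.2] at hs
      have hcs : Continuous fun ξ => N ξ s := hN.comp (continuous_id.prodMk continuous_const)
      have hcs1 : Continuous fun ξ => N1 ξ s := hN1.comp (continuous_id.prodMk continuous_const)
      rw [intervalIntegral.integral_eq_sub_of_hasDerivAt_of_le (f := fun ξ => N ξ s *ᵥ u s) hs.1]
      · simp
      · exact Continuous.continuousOn (by fun_prop)
      · intro ξ hξ
        simpa using hasDerivAt_mulVec (fun i j => hd i j ξ s (hx.1.trans_lt hξ.1) hξ.2 hs.2)
          (hasDerivAt_const ξ (u s))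
      · exact Continuous.intervalIntegrable (by fun_prop) _ _
    have hsw := integral_triangle_swap (F := fun ξ s => N1 ξ s *ᵥ u s) hF hx.2
    have hI2 : Continuous fun s => ∫ ξ in x..s, N1 ξ s *ᵥ u s :=
      continuous_integral_bounds (f := fun s ξ => N1 ξ s *ᵥ u s) (hF.comp continuous_swap)
        continuous_const continuous_id
    rw [intervalIntegral.integral_congr h1, intervalIntegral.integral_sub
      (hNu.intervalIntegrable _ _) (hI2.intervalIntegrable _ _), ← hsw,
      ← intervalIntegral.integral_sub (hNu.intervalIntegrable _ _) (hI.intervalIntegrable _ _)]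
  have hd := (intervalIntegral.integral_hasDerivAt_left (hgc.intervalIntegrable x T)
    (hgc.stronglyMeasurableAtFilter _ _) hgc.continuousAt).hasDerivWithinAt (s := Icc 0 T)
  refine (hd.congr key (key x hx)).congr_deriv ?_
  simp only [hg]; abel

open Matrix in
/-- Integration by parts against a kernel; there is no boundary term at `T` because `w T = 0`. -/
theorem volterra_by_parts {T : ℝ} {M M2 : ℝ → ℝ → Matrix (Fin 2) (Fin 2) ℂ}
    (hM : Continuous fun z : ℝ × ℝ => M z.1 z.2) (hM2 : Continuous fun z : ℝ × ℝ => M2 z.1 z.2)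
    (hd : ∀ i j x s, 0 ≤ x → x < s → s < T → HasDerivAt (fun s' => M x s' i j) (M2 x s i j) s)
    {w w' : ℝ → Fin 2 → ℂ} (hw : Continuous w) (hw' : Continuous w')
    (hdw : ∀ s ∈ Ioo 0 T, HasDerivAt w (w' s) s) (hwT : w T = 0) {x : ℝ} (hx : x ∈ Icc 0 T) :
    ∫ s in x..T, M x s *ᵥ w' s = -(M x x *ᵥ w x) - ∫ s in x..T, M2 x s *ᵥ w s := by
  have hc : Continuous fun s => M x s := hM.comp (continuous_const.prodMk continuous_id)
  have hc2 : Continuous fun s => M2 x s := hM2.comp (continuous_const.prodMk continuous_id)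
  have h1 : Continuous fun s => M2 x s *ᵥ w s := by fun_prop
  have h2 : Continuous fun s => M x s *ᵥ w' s := by fun_prop
  have := intervalIntegral.integral_eq_sub_of_hasDerivAt_of_le (f := fun s => M x s *ᵥ w s)
    (f' := fun s => M2 x s *ᵥ w s + M x s *ᵥ w' s) hx.2
    (Continuous.continuousOn (by fun_prop))
    (fun s hs => hasDerivAt_mulVec (fun i j => hd i j x s hx.1 hs.1 hs.2)
      (hdw s ⟨hx.1.trans_lt hs.1, hs.2⟩))
    ((h1.add h2).intervalIntegrable _ _)
  rw [intervalIntegral.integral_add (h1.intervalIntegrable _ _) (h2.intervalIntegrable _ _),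
    hwT, Matrix.mulVec_zero, zero_sub] at this
  rw [← this]; abel

/-! ### Conjugation by `κ` -/

open Matrix Complex in
theorem inv_kappaMat : kappaMat⁻¹ = !![1 / 2, -I / 2; 1 / 2, I / 2] := by
  refine Matrix.inv_eq_right_inv ?_
  ext i j
  fin_cases i <;> fin_cases j <;>
    (simp [kappaMat, Matrix.mul_apply, Fin.sum_univ_two]; try (ring_nf; try simp))

open Matrix Complex in
theorem kappa_conj_Q : kappaMat * (I • Qmat) * kappaMat⁻¹ = Jmat := by
  rw [inv_kappaMat]
  ext i j
  fin_cases i <;> fin_cases j <;>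
    (simp [kappaMat, Qmat, Jmat, Matrix.mul_apply, Fin.sum_univ_two]; try (ring_nf; try simp))

open Matrix Complex in
theorem kappa_conj_commutator (m : ℝ → ℝ → Matrix (Fin 2) (Fin 2) ℂ) (x : ℝ) :
    kappaMat * ((I • Qmat) * m x x - m x x * (I • Qmat)) * kappaMat⁻¹ = VofM m x := by
  rw [inv_kappaMat]
  have hA := Matrix.eta_fin_two (m x x)
  unfold VofM pEntry qEntry
  generalize m x x = A at hA ⊢
  rw [hA]
  ext i j
  fin_cases i <;> fin_cases j <;>
    simp [kappaMat, Qmat, Matrix.mul_apply, Fin.sum_univ_two] <;>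
    ring_nf <;> simp <;> ring_nf

/-! ### The conjugation identity -/

open Matrix in
/-- The remainder kernel before conjugation by `κ`. Here `M2` stands for the partial derivative of
`M` in its second variable and `N1` for that of `N` in its first variable. The matrix integral is
taken entrywise. -/
def remKernel (D : Matrix (Fin 2) (Fin 2) ℂ) (M M2 N N1 : ℝ → ℝ → Matrix (Fin 2) (Fin 2) ℂ)
    (x τ : ℝ) : Matrix (Fin 2) (Fin 2) ℂ :=
  D * N1 x τ - M2 x τ * D - M x τ * D * N τ τ
    + Matrix.of fun i j => ∫ ξ in x..τ, (M x ξ * D * N1 ξ τ) i j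

open Matrix in
theorem continuous_remKernel {D : Matrix (Fin 2) (Fin 2) ℂ}
    {M M2 N N1 : ℝ → ℝ → Matrix (Fin 2) (Fin 2) ℂ}
    (hM : Continuous fun z : ℝ × ℝ => M z.1 z.2) (hM2 : Continuous fun z : ℝ × ℝ => M2 z.1 z.2)
    (hN : Continuous fun z : ℝ × ℝ => N z.1 z.2) (hN1 : Continuous fun z : ℝ × ℝ => N1 z.1 z.2) :
    Continuous fun z : ℝ × ℝ => remKernel D M M2 N N1 z.1 z.2 := by
  have hNd : Continuous fun z : ℝ × ℝ => N z.2 z.2 :=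
    hN.comp (continuous_snd.prodMk continuous_snd)
  have hMx : Continuous fun p : (ℝ × ℝ) × ℝ => M p.1.1 p.2 :=
    hM.comp ((continuous_fst.comp continuous_fst).prodMk continuous_snd)
  have hNx : Continuous fun p : (ℝ × ℝ) × ℝ => N1 p.2 p.1.2 :=
    hN1.comp (continuous_snd.prodMk (continuous_snd.comp continuous_fst))
  have hI : Continuous fun z : ℝ × ℝ =>
      (Matrix.of fun i j => ∫ ξ in z.1..z.2, (M z.1 ξ * D * N1 ξ z.2) i j :
        Matrix (Fin 2) (Fin 2) ℂ) := by
    refine continuous_matrix fun i j => ?_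
    exact continuous_integral_bounds (f := fun (z : ℝ × ℝ) ξ => (M z.1 ξ * D * N1 ξ z.2) i j)
      (((hMx.matrix_mul continuous_const).matrix_mul hNx).matrix_elem i j)
      continuous_fst continuous_snd
  unfold remKernel
  exact (((continuous_const.matrix_mul hN1).sub (hM2.matrix_mul continuous_const)).sub
    ((hM.matrix_mul continuous_const).matrix_mul hNd)).add hI

open Matrix in
/-- The operator `(I + M) D d/dx (I + N)` in first-order form, where `W` is the derivative of
`(I + N) u` as given by the Leibniz rule. -/
theorem conjugation_identity {T : ℝ} (D : Matrix (Fin 2) (Fin 2) ℂ)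
    {M M2 N N1 : ℝ → ℝ → Matrix (Fin 2) (Fin 2) ℂ}
    (hM : Continuous fun z : ℝ × ℝ => M z.1 z.2) (hM2 : Continuous fun z : ℝ × ℝ => M2 z.1 z.2)
    (hN : Continuous fun z : ℝ × ℝ => N z.1 z.2) (hN1 : Continuous fun z : ℝ × ℝ => N1 z.1 z.2)
    (hdM : ∀ i j x s, 0 ≤ x → x < s → s < T → HasDerivAt (fun s' => M x s' i j) (M2 x s i j) s)
    {u u' : ℝ → Fin 2 → ℂ} (hu : Continuous u) (hu' : Continuous u')
    (hdu : ∀ s ∈ Ioo 0 T, HasDerivAt u (u' s) s) (huT : u T = 0) {x : ℝ} (hx : x ∈ Icc 0 T)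
    (hdiag : N x x = -M x x)
    {W : ℝ → Fin 2 → ℂ}
    (hW : ∀ s, W s = u' s + (-(N s s *ᵥ u s) + ∫ τ in s..T, N1 s τ *ᵥ u τ)) :
    D *ᵥ W x + ∫ s in x..T, M x s *ᵥ (D *ᵥ W s)
      = D *ᵥ u' x + (D * M x x - M x x * D) *ᵥ u x
        + ∫ s in x..T, remKernel D M M2 N N1 x s *ᵥ u s := by
  have hMx : Continuous fun s => M x s := hM.comp (continuous_const.prodMk continuous_id)
  have hM2x : Continuous fun s => M2 x s := hM2.comp (continuous_const.prodMk continuous_id)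
  have hN1x : Continuous fun s => N1 x s := hN1.comp (continuous_const.prodMk continuous_id)
  have hNd : Continuous fun s => N s s := hN.comp (continuous_id.prodMk continuous_id)
  have hG : Continuous fun z : ℝ × ℝ => (M x z.1 * D * N1 z.1 z.2) *ᵥ u z.2 :=
    (((hMx.comp continuous_fst).matrix_mul continuous_const).matrix_mul hN1).matrix_mulVec
      (hu.comp continuous_snd)
  have hparts := volterra_by_parts hM hM2 hdM (w := fun s => D *ᵥ u s) (w' := fun s => D *ᵥ u' s)
    (by fun_prop) (by fun_prop)
    (fun s hs => (hasDerivAt_mulVec (A := fun _ => D) (A' := 0)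
      (fun i j => hasDerivAt_const s (D i j)) (hdu s hs)).congr_deriv
        (by rw [Matrix.zero_mulVec, zero_add]))
    (by simp [huT]) hx
  have hswap := integral_triangle_swap (F := fun s τ => (M x s * D * N1 s τ) *ᵥ u τ) hG hx.2
  have c1 : Continuous fun s => M x s *ᵥ (D *ᵥ u' s) := by fun_prop
  have c2 : Continuous fun s => (M x s * D * N s s) *ᵥ u s := by fun_prop
  have c3 : Continuous fun s => ∫ τ in s..T, (M x s * D * N1 s τ) *ᵥ u τ :=
    continuous_integral_bounds (f := fun s τ => (M x s * D * N1 s τ) *ᵥ u τ) hG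
      continuous_id continuous_const
  have hL : ∀ s, M x s *ᵥ (D *ᵥ W s) = M x s *ᵥ (D *ᵥ u' s) - (M x s * D * N s s) *ᵥ u s
      + ∫ τ in s..T, (M x s * D * N1 s τ) *ᵥ u τ := by
    intro s
    have hc : Continuous fun τ => N1 s τ *ᵥ u τ :=
      (hN1.comp (continuous_const.prodMk continuous_id)).matrix_mulVec hu
    have := mulVec_integral (M x s * D) hc s T
    simp only [Matrix.mulVec_mulVec] at this
    rw [hW, ← this]
    simp only [Matrix.mulVec_add, Matrix.mulVec_neg, Matrix.mulVec_mulVec, Matrix.mul_assoc]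
    abel
  have d1 : Continuous fun s => (D * N1 x s) *ᵥ u s := by fun_prop
  have d2 : Continuous fun s => M2 x s *ᵥ (D *ᵥ u s) := by fun_prop
  have hN1s : Continuous fun z : ℝ × ℝ => N1 z.2 z.1 :=
    hN1.comp (continuous_snd.prodMk continuous_fst)
  have hMs : Continuous fun z : ℝ × ℝ => M x z.2 := hMx.comp continuous_snd
  have hGs : Continuous fun z : ℝ × ℝ => (M x z.2 * D * N1 z.2 z.1) *ᵥ u z.1 :=
    ((hMs.matrix_mul continuous_const).matrix_mul hN1s).matrix_mulVec (hu.comp continuous_fst)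
  have d4 : Continuous fun s => ∫ ξ in x..s, (M x ξ * D * N1 ξ s) *ᵥ u s :=
    continuous_integral_bounds (f := fun s ξ => (M x ξ * D * N1 ξ s) *ᵥ u s) hGs
      continuous_const continuous_id
  have hR : ∀ s, remKernel D M M2 N N1 x s *ᵥ u s = (D * N1 x s) *ᵥ u s - M2 x s *ᵥ (D *ᵥ u s)
      - (M x s * D * N s s) *ᵥ u s + ∫ ξ in x..s, (M x ξ * D * N1 ξ s) *ᵥ u s := by
    intro s
    have hc : Continuous fun ξ => M x ξ * D * N1 ξ s :=
      (hMx.matrix_mul continuous_const).matrix_mul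
        (hN1.comp (continuous_id.prodMk continuous_const))
    rw [← integral_mulVec hc]
    simp only [remKernel, Matrix.add_mulVec, Matrix.sub_mulVec, Matrix.mulVec_mulVec]
  have hD := mulVec_integral D (hN1x.matrix_mulVec hu) x T
  simp only [Matrix.mulVec_mulVec] at hD
  have i1 := c1.intervalIntegrable (μ := volume) x T
  have i2 := c2.intervalIntegrable (μ := volume) x T
  have i3 := c3.intervalIntegrable (μ := volume) x T
  have j1 := d1.intervalIntegrable (μ := volume) x T
  have j2 := d2.intervalIntegrable (μ := volume) x T
  have j4 := d4.intervalIntegrable (μ := volume) x T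
  simp only [hL, hR]
  rw [intervalIntegral.integral_add (i1.sub i2) i3, intervalIntegral.integral_sub i1 i2,
    intervalIntegral.integral_add ((j1.sub j2).sub i2) j4,
    intervalIntegral.integral_sub (j1.sub j2) i2, intervalIntegral.integral_sub j1 j2,
    hparts, hswap, ← hD, hW, hdiag]
  simp only [Matrix.mulVec_add, Matrix.mulVec_neg, Matrix.neg_mulVec, Matrix.sub_mulVec,
    Matrix.mulVec_mulVec]
  abel

/-- Conjugating `-iQ d/dt` by the operator `κ(I+M)Y` (with
`Y⁻¹(I+N)κ⁻¹` its inverse, expressed by the kernel relation) produces a Dirac-type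
operator `J d/dx + V` plus a triangular integral remainder. -/
theorem stmt17 (T : ℝ) (hT : 0 < T)
    (m n : ℝ → ℝ → Matrix (Fin 2) (Fin 2) ℂ)
    (hm : ∀ i j, ContDiffOn ℝ 1 (fun z : ℝ × ℝ => m z.1 z.2 i j) (DeltaT T))
    (hn : ∀ i j, ContDiffOn ℝ 1 (fun z : ℝ × ℝ => n z.1 z.2 i j) (DeltaT T))
    (hrel : ∀ x τ : ℝ, 0 ≤ x → x ≤ τ → τ ≤ T → ∀ i j,
      m x τ i j + n x τ i j + (∫ s in x..τ, (m x s * n s τ) i j) = 0) :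
    ∃ h : ℝ → ℝ → Matrix (Fin 2) (Fin 2) ℂ,
      (∀ i j, ContinuousOn (fun z : ℝ × ℝ => h z.1 z.2 i j) (DeltaT T)) ∧
      ∀ y : ℝ → Fin 2 → ℂ, ContDiffOn ℝ 1 y (Icc 0 T) → y T = 0 →
        ∀ x ∈ Icc (0 : ℝ) T,
          Lop17 T m n y x
            = Jmat.mulVec (derivWithin y (Icc (0 : ℝ) T) x)
              + (VofM m x).mulVec (y x)
              + ∫ s in x..T, (h x s).mulVec (y s) := by
  choose m0 m1 m2 hm0 hm1 hm2 hmeq hmd1 hmd2 using fun i j => exists_extension_s17 hT (hm i j)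
  choose n0 n1 n2 hn0 hn1 hn2 hneq hnd1 hnd2 using fun i j => exists_extension_s17 hT (hn i j)
  set M : ℝ → ℝ → Matrix (Fin 2) (Fin 2) ℂ := fun x s => Matrix.of fun i j => m0 i j (x, s) with hMd
  set M2 : ℝ → ℝ → Matrix (Fin 2) (Fin 2) ℂ := fun x s => Matrix.of fun i j => m2 i j (x, s)
  set N : ℝ → ℝ → Matrix (Fin 2) (Fin 2) ℂ := fun x s => Matrix.of fun i j => n0 i j (x, s) with hNd
  set N1 : ℝ → ℝ → Matrix (Fin 2) (Fin 2) ℂ := fun x s => Matrix.of fun i j => n1 i j (x, s)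
  have hM : Continuous fun z : ℝ × ℝ => M z.1 z.2 := continuous_matrix fun i j => hm0 i j
  have hM2 : Continuous fun z : ℝ × ℝ => M2 z.1 z.2 := continuous_matrix fun i j => hm2 i j
  have hN : Continuous fun z : ℝ × ℝ => N z.1 z.2 := continuous_matrix fun i j => hn0 i j
  have hN1 : Continuous fun z : ℝ × ℝ => N1 z.1 z.2 := continuous_matrix fun i j => hn1 i j
  have hMm : ∀ x s, 0 ≤ x → x ≤ s → s ≤ T → m x s = M x s := fun x s h1 h2 h3 => by
    ext i j; exact (hmeq i j (x, s) ⟨h1, h2, h3⟩).symm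
  have hNn : ∀ x s, 0 ≤ x → x ≤ s → s ≤ T → n x s = N x s := fun x s h1 h2 h3 => by
    ext i j; exact (hneq i j (x, s) ⟨h1, h2, h3⟩).symm
  set D : Matrix (Fin 2) (Fin 2) ℂ := Complex.I • Qmat with hD
  have hH := continuous_remKernel (D := D) hM hM2 hN hN1
  refine ⟨fun x s => kappaMat * remKernel D M M2 N N1 x s * kappaMat⁻¹, fun i j => ?_, ?_⟩
  · exact (((continuous_const.matrix_mul hH).matrix_mul continuous_const).matrix_elem
      i j).continuousOn
  intro y hy hyT x hx
  set P : Matrix (Fin 2) (Fin 2) ℂ := kappaMat⁻¹ with hP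
  -- `u` and `u'` are `κ⁻¹ y` and `κ⁻¹ y'`, made continuous on the line by clamping to `[0, T]`
  set c : ℝ → ℝ := fun s => max 0 (min T s) with hc
  have hcc : Continuous c := by fun_prop
  have hcm : ∀ s, c s ∈ Icc 0 T := fun s => by simp [hc, hT.le]
  have hce : ∀ s ∈ Icc 0 T, c s = s := fun s hs => by simp [hc, hs.1, hs.2]
  have hyd := hy.continuousOn_derivWithin (uniqueDiffOn_Icc hT) le_rfl
  set u : ℝ → Fin 2 → ℂ := fun s => P.mulVec (y (c s)) with hu
  set u' : ℝ → Fin 2 → ℂ := fun s => P.mulVec (derivWithin y (Icc 0 T) (c s)) with hu'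
  have huc : Continuous u :=
    continuous_const.matrix_mulVec (hy.continuousOn.comp_continuous hcc hcm)
  have huc' : Continuous u' :=
    continuous_const.matrix_mulVec (hyd.comp_continuous hcc hcm)
  have hue : ∀ s ∈ Icc 0 T, P.mulVec (y s) = u s := fun s hs => by simp only [hu, hce s hs]
  have hduw : ∀ s ∈ Icc 0 T, HasDerivWithinAt u (u' s) (Icc 0 T) s := by
    intro s hs
    have h1 := ((hy.differentiableOn one_ne_zero) s hs).hasDerivWithinAt
    have h2 := (LinearMap.toContinuousLinearMap
      ((Matrix.mulVecLin P).restrictScalars ℝ)).hasFDerivAt.comp_hasDerivWithinAt s h1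
    have h3 := h2.congr (f₁ := u) (fun t ht => (hue t ht).symm) (hue s hs).symm
    refine h3.congr_deriv ?_
    simp only [hu', hce s hs]
    rfl
  have hdu : ∀ s ∈ Ioo 0 T, HasDerivAt u (u' s) s := fun s hs =>
    (hduw s (Ioo_subset_Icc_self hs)).hasDerivAt (Icc_mem_nhds hs.1 hs.2)
  have huT : u T = 0 := by
    rw [← hue T ⟨hT.le, le_rfl⟩, hyT, Matrix.mulVec_zero]
  have hdiag : N x x = -M x x := by
    ext i j
    have := hrel x x hx.1 le_rfl hx.2 i j
    rw [hMm x x hx.1 le_rfl hx.2, hNn x x hx.1 le_rfl hx.2, intervalIntegral.integral_same,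
      add_zero, add_comm] at this
    simpa using eq_neg_of_add_eq_zero_left this
  set W : ℝ → Fin 2 → ℂ :=
    fun s => u' s + (-((N s s).mulVec (u s)) + ∫ τ in s..T, (N1 s τ).mulVec (u τ)) with hW
  -- the derivative of `(I + N) κ⁻¹ y`
  have hz₂ : ∀ s ∈ Icc 0 T, HasDerivWithinAt
      (fun x => P.mulVec (y x) + ∫ s in x..T, (n x s).mulVec (P.mulVec (y s)))
      (W s) (Icc 0 T) s := by
    intro s hs
    have h1 := (hduw s hs).add (hasDerivWithinAt_volterra hN hN1
      (fun i j x s h0 hxs hs => hnd1 i j x s h0 hxs hs) huc hs)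
    have h2 : ∀ x ∈ Icc 0 T, P.mulVec (y x) + ∫ s in x..T, (n x s).mulVec (P.mulVec (y s))
        = u x + ∫ s in x..T, (N x s).mulVec (u s) := by
      intro x hx
      rw [hue x hx]
      congr 1
      refine intervalIntegral.integral_congr fun s hs => ?_
      rw [uIcc_of_le hx.2] at hs
      simp only [hNn x s hx.1 hs.1 hs.2, hue s ⟨hx.1.trans hs.1, hs.2⟩]
    exact h1.congr h2 (h2 s hs)
  -- the two reflections `t = T - s` change the sign of the derivative, so `-iQ d/dt` acts as `iQ d/ds`
  have hz₅ : ∀ s ∈ Icc 0 T, (-Complex.I) • Qmat.mulVec (derivWithin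
      (fun t => P.mulVec (y (T - t)) + ∫ s in (T - t)..T, (n (T - t) s).mulVec (P.mulVec (y s)))
      (Icc (0 : ℝ) T) (T - s)) = D.mulVec (W s) := by
    intro s hs
    have hmaps : MapsTo (fun t => T - t) (Icc 0 T) (Icc 0 T) := fun t ht =>
      ⟨sub_nonneg.2 ht.2, sub_le_self _ ht.1⟩
    have h0 : HasDerivWithinAt (fun t : ℝ => T - t) (-1) (Icc 0 T) (T - s) := by
      simpa using (hasDerivWithinAt_id (T - s) (Icc 0 T)).const_sub T
    have h1 := hz₂ s hs
    rw [← sub_sub_cancel T s] at h1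
    have h2 := HasDerivWithinAt.scomp (T - s) h1 h0 hmaps
    have h3 := h2.derivWithin (uniqueDiffOn_Icc hT _ (hmaps hs))
    rw [sub_sub_cancel] at h3
    change (-Complex.I) • Qmat.mulVec (derivWithin
      ((fun x => P.mulVec (y x) + ∫ s in x..T, (n x s).mulVec (P.mulVec (y s))) ∘
        fun t => T - t) (Icc (0 : ℝ) T) (T - s)) = _
    rw [h3]
    simp only [hD, neg_smul, one_smul, Matrix.mulVec_neg, Matrix.smul_mulVec, smul_neg, neg_neg]
  have hLop : Lop17 T m n y x
      = kappaMat.mulVec (D.mulVec (W x) + ∫ s in x..T, (M x s).mulVec (D.mulVec (W s))) := by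
    unfold Lop17
    dsimp only
    rw [hz₅ x hx]
    congr 2
    refine intervalIntegral.integral_congr fun s hs => ?_
    rw [uIcc_of_le hx.2] at hs
    rw [hz₅ s ⟨hx.1.trans hs.1, hs.2⟩, hMm x s hx.1 hs.1 hs.2]
  have hHu : Continuous fun s => (remKernel D M M2 N N1 x s).mulVec (u s) :=
    (hH.comp (continuous_const.prodMk continuous_id)).matrix_mulVec huc
  rw [hLop, conjugation_identity D hM hM2 hN hN1
    (fun i j x s h0 hxs hs => hmd2 i j x s h0 hxs hs) huc huc' hdu huT hx hdiag (fun s => rfl),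
    Matrix.mulVec_add, Matrix.mulVec_add, mulVec_integral _ hHu, ← kappa_conj_Q,
    ← kappa_conj_commutator, hMm x x hx.1 le_rfl hx.2, ← hD]
  congr 1
  · simp only [hu, hu', hce x hx, Matrix.mulVec_mulVec, Matrix.mul_assoc, hP]
  · refine intervalIntegral.integral_congr fun s hs => ?_
    rw [uIcc_of_le hx.2] at hs
    simp only [hu, hce s ⟨hx.1.trans hs.1, hs.2⟩, Matrix.mulVec_mulVec, Matrix.mul_assoc]
end
end
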